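/- arXiv:1401.6843 — 3 statements merged into one kernel-verified Lean document; each statement's English description precedes it below -/
import Mathlib

section
/- The n² elements e_{2i,j} (1 ≤ i ≤ n²/2, j ∈ {0,1}) form a complete set of primitive orthogonal idempotents of the subalgebra u⁰ of u generated by K and K̂: each e_{2i,j} is a nonzero idempotent, e_{2i,j}·e_{2i',j'} = 0 whenever (i,j) ≠ (i',j'), the sum of all e_{2i,j} equals 1, and no e_{2i,j} can be written as a sum of two nonzero orthogonal idempotents of u⁰. -/
noncomputable section

open scoped TensorProduct

namespace QFL

/-- The defining relations of the quasi-Frobenius-Lusztig kernel `ũ_q(sl₂)`,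
on the free algebra on four generators `K = ι 0`, `K̂ = ι 1`, `E = ι 2`, `F = ι 3`. -/
inductive Rel (k : Type) [Field k] (n : ℕ) (q : k) :
    FreeAlgebra k (Fin 4) → FreeAlgebra k (Fin 4) → Prop
  | Kord : Rel k n q (FreeAlgebra.ι k (0 : Fin 4) ^ n) 1
  | Khord : Rel k n q (FreeAlgebra.ι k (1 : Fin 4) ^ n)
      ((FreeAlgebra.ι k (0 : Fin 4) ^ (n - 1)) ^ 2)
  | KKh : Rel k n q (FreeAlgebra.ι k (0 : Fin 4) * FreeAlgebra.ι k (1 : Fin 4))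
      (FreeAlgebra.ι k (1 : Fin 4) * FreeAlgebra.ι k (0 : Fin 4))
  | KE : Rel k n q
      (FreeAlgebra.ι k (0 : Fin 4) * FreeAlgebra.ι k (2 : Fin 4) *
        FreeAlgebra.ι k (0 : Fin 4) ^ (n - 1))
      (q ^ n • FreeAlgebra.ι k (2 : Fin 4))
  | KF : Rel k n q
      (FreeAlgebra.ι k (0 : Fin 4) * FreeAlgebra.ι k (3 : Fin 4) *
        FreeAlgebra.ι k (0 : Fin 4) ^ (n - 1))
      ((q ^ n)⁻¹ • FreeAlgebra.ι k (3 : Fin 4))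
  | KhE : Rel k n q
      (FreeAlgebra.ι k (1 : Fin 4) * FreeAlgebra.ι k (2 : Fin 4) *
        FreeAlgebra.ι k (1 : Fin 4) ^ (n ^ 2 - 1))
      ((q ^ n * (q ^ 2)⁻¹) • FreeAlgebra.ι k (2 : Fin 4))
  | KhF : Rel k n q
      (FreeAlgebra.ι k (1 : Fin 4) * FreeAlgebra.ι k (3 : Fin 4) *
        FreeAlgebra.ι k (1 : Fin 4) ^ (n ^ 2 - 1))
      (((q ^ n)⁻¹ * q ^ 2) • FreeAlgebra.ι k (3 : Fin 4))
  | Enil : Rel k n q (FreeAlgebra.ι k (2 : Fin 4) ^ n ^ 2) 0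
  | Fnil : Rel k n q (FreeAlgebra.ι k (3 : Fin 4) ^ n ^ 2) 0
  | EF : Rel k n q
      (FreeAlgebra.ι k (3 : Fin 4) * FreeAlgebra.ι k (2 : Fin 4) -
        q⁻¹ • (FreeAlgebra.ι k (2 : Fin 4) * FreeAlgebra.ι k (3 : Fin 4)))
      (1 - FreeAlgebra.ι k (0 : Fin 4) ^ (n - 1) * FreeAlgebra.ι k (1 : Fin 4))

/-- The algebra `ũ_q(sl₂)` as the quotient of the free algebra by the defining relations. -/
abbrev U (k : Type) [Field k] (n : ℕ) (q : k) := RingQuot (Rel k n q)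

variable (k : Type) [Field k] (n : ℕ) (q : k)

def K : U k n q := RingQuot.mkAlgHom k (Rel k n q) (FreeAlgebra.ι k (0 : Fin 4))
def Kh : U k n q := RingQuot.mkAlgHom k (Rel k n q) (FreeAlgebra.ι k (1 : Fin 4))
def E : U k n q := RingQuot.mkAlgHom k (Rel k n q) (FreeAlgebra.ι k (2 : Fin 4))
def F : U k n q := RingQuot.mkAlgHom k (Rel k n q) (FreeAlgebra.ι k (3 : Fin 4))

/-- `K⁻¹ = K^(n-1)`. -/
def Kinv : U k n q := K k n q ^ (n - 1)
/-- `K̂⁻¹ = K̂^(n²-1)`. -/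
def Khinv : U k n q := Kh k n q ^ (n ^ 2 - 1)

/-- `φ_{2i} = (2/n²) Σ_{t<n²/2} q^{-2it} (K⁻¹K̂)^t`. -/
def phi (i : ℕ) : U k n q :=
  ((n ^ 2 : k)⁻¹ * 2) • ∑ t ∈ Finset.range (n ^ 2 / 2),
    (q⁻¹ ^ (2 * i * t)) • (Kinv k n q * Kh k n q) ^ t

/-- `𝟙₀ = (1/2)(1 + KK̂^(n/2))` and `𝟙₁ = (1/2)(1 - KK̂^(n/2))`. -/
def oneJ (j : ℕ) : U k n q :=
  if j = 0 then (2 : k)⁻¹ • (1 + K k n q * Kh k n q ^ (n / 2))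
  else (2 : k)⁻¹ • (1 - K k n q * Kh k n q ^ (n / 2))

/-- The idempotent `e_{2i,j} = φ_{2i} 𝟙_j`. -/
def eIdem (i j : ℕ) : U k n q := phi k n q i * oneJ k n q j

/-- `α_{2i,j} = F^(n²-1) e_{2i,j}`. -/
def alpha (i j : ℕ) : U k n q := F k n q ^ (n ^ 2 - 1) * eIdem k n q i j

/-- `β_{2i,j} = E^(2i-2) α_{2i,j}`. -/
def beta (i j : ℕ) : U k n q := E k n q ^ (2 * i - 2) * alpha k n q i j

/-- The Gaussian number `s_q = 1 + q + ⋯ + q^(s-1)`. -/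
def gauss (x : k) (s : ℕ) : k := ∑ t ∈ Finset.range s, x ^ t

/-- The span of the PBW-type monomials `F^a K^c K̂^d E^b` with `a ≤ n²-2`, `b ≤ n²-1`,
`c ≤ n-1`, `d ≤ n²-1`. -/
def pbw : Submodule k (U k n q) :=
  Submodule.span k {x | ∃ a b c d : ℕ, a ≤ n ^ 2 - 2 ∧ b ≤ n ^ 2 - 1 ∧ c ≤ n - 1 ∧
    d ≤ n ^ 2 - 1 ∧ x = F k n q ^ a * K k n q ^ c * Kh k n q ^ d * E k n q ^ b}

/-- `γ_{2i,j}`: the unique element of the PBW span with `F·γ = β_{2i,j}`. -/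
def gam (i j : ℕ) : U k n q :=
  @dite _ (∃! x, x ∈ pbw k n q ∧ F k n q * x = beta k n q i j)
    (Classical.propDecidable _) (fun h => h.choose) (fun _ => 0)

/-- The left ideal `P_{2i,j} = u·γ_{2i,j}`. -/
def P (i j : ℕ) : Submodule (U k n q) (U k n q) :=
  Submodule.span (U k n q) {gam k n q i j}

/-- `S_{2i,j} = Soc(P_{2i,j})`, the sum of all simple submodules of `P_{2i,j}`. -/
def S (i j : ℕ) : Submodule (U k n q) (U k n q) :=
  sSup {N : Submodule (U k n q) (U k n q) | N ≤ P k n q i j ∧ IsSimpleModule (U k n q) N}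

end QFL

namespace QFLAux

variable {k : Type} [Field k] {A : Type} [Ring A] [Algebra k A]

/-- the spectral projection of an element `g` of order dividing `N`. -/
def Pr (N : ℕ) (z : k) (g : A) (i : ℕ) : A :=
  (N : k)⁻¹ • ∑ t ∈ Finset.range N, ((z⁻¹ ^ i) • g) ^ t

theorem Pr_mem (S : Subalgebra k A) {g : A} (hg : g ∈ S) (N : ℕ) (z : k) (i : ℕ) :
    Pr N z g i ∈ S :=
  S.smul_mem (S.sum_mem fun _ _ => S.pow_mem (S.smul_mem hg _) _) _

theorem g_mul_Pr {N : ℕ} {z : k} {g : A} (hz : z ≠ 0) (hzN : z ^ N = 1) (hg : g ^ N = 1) (i : ℕ) :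
    g * Pr N z g i = z ^ i • Pr N z g i := by
  have h1 : ((z⁻¹ ^ i) • g) ^ N = 1 := by
    rw [smul_pow, hg, ← pow_mul, mul_comm, pow_mul, inv_pow, hzN]; simp
  have h2 := mul_geom_sum ((z⁻¹ ^ i) • g) N
  rw [h1, sub_self, sub_mul, one_mul, sub_eq_zero] at h2
  have h3 : g = z ^ i • ((z⁻¹ ^ i) • g) := by
    rw [smul_smul, ← mul_pow, mul_inv_cancel₀ hz]; simp
  unfold Pr
  generalize z⁻¹ ^ i • g = h at *
  rw [h3, smul_mul_assoc, mul_smul_comm, h2]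

theorem gpow_mul_Pr {N : ℕ} {z : k} {g : A} (hz : z ≠ 0) (hzN : z ^ N = 1) (hg : g ^ N = 1)
    (i t : ℕ) : g ^ t * Pr N z g i = (z ^ i) ^ t • Pr N z g i := by
  induction t with
  | zero => simp
  | succ t ih =>
    rw [pow_succ, mul_assoc, g_mul_Pr hz hzN hg, mul_smul_comm, ih, smul_smul, pow_succ, mul_comm]

theorem Pr_mul_Pr {N : ℕ} {z : k} {g : A} (hz : z ≠ 0) (hzN : z ^ N = 1) (hg : g ^ N = 1)
    (i j : ℕ) : Pr N z g i * Pr N z g j =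
      ((N : k)⁻¹ * ∑ t ∈ Finset.range N, (z⁻¹ ^ i * z ^ j) ^ t) • Pr N z g j := by
  conv_lhs => rw [Pr]
  rw [smul_mul_assoc, Finset.sum_mul, mul_smul, Finset.sum_smul]
  congr 1
  refine Finset.sum_congr rfl fun t _ => ?_
  rw [smul_pow, smul_mul_assoc, gpow_mul_Pr hz hzN hg, smul_smul, mul_pow]

theorem Pr_idem [CharZero k] {N : ℕ} {z : k} {g : A} (hN : 0 < N) (hz : z ≠ 0) (hzN : z ^ N = 1)
    (hg : g ^ N = 1) (i : ℕ) : Pr N z g i * Pr N z g i = Pr N z g i := by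
  rw [Pr_mul_Pr hz hzN hg, ← mul_pow, inv_mul_cancel₀ hz]
  have : (N : k) ≠ 0 := by exact_mod_cast hN.ne'
  simp [this]

theorem Pr_orth {N : ℕ} {z : k} {g : A} (hz : z ≠ 0) (hzN : z ^ N = 1)
    (hg : g ^ N = 1) (i j : ℕ) (hij : z ^ i ≠ z ^ j) : Pr N z g i * Pr N z g j = 0 := by
  rw [Pr_mul_Pr hz hzN hg]
  have h1 : z⁻¹ ^ i * z ^ j ≠ 1 := by
    intro h
    apply hij
    have : z ^ i * (z⁻¹ ^ i * z ^ j) = z ^ i := by rw [h, mul_one]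
    rw [← mul_assoc, ← mul_pow, mul_inv_cancel₀ hz, one_pow, one_mul] at this
    exact this.symm
  have h2 := mul_geom_sum (z⁻¹ ^ i * z ^ j) N
  have h3 : (z⁻¹ ^ i * z ^ j) ^ N = 1 := by
    rw [mul_pow, ← pow_mul, ← pow_mul, mul_comm i, mul_comm j, pow_mul, pow_mul, inv_pow, hzN]
    simp
  rw [h3, sub_self] at h2
  rw [(mul_eq_zero.mp h2).resolve_left (sub_ne_zero.mpr h1)]
  simp

theorem Pr_sum [CharZero k] {N : ℕ} {z : k} (g : A) (hN : 0 < N) (hz : IsPrimitiveRoot z N) :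
    ∑ i ∈ Finset.Icc 1 N, Pr N z g i = 1 := by
  have hNk : (N : k) ≠ 0 := by exact_mod_cast hN.ne'
  have key : ∀ t ∈ Finset.range N,
      (∑ i ∈ Finset.Icc 1 N, ((z⁻¹ ^ i) • g) ^ t) = if t = 0 then (N : k) • (1 : A) else 0 := by
    intro t ht
    have h0 : ∀ i, ((z⁻¹ ^ i) • g) ^ t = ((z⁻¹ ^ t) ^ i) • g ^ t := by
      intro i; rw [smul_pow, ← pow_mul, ← pow_mul, mul_comm]
    simp_rw [h0, ← Finset.sum_smul]
    have hs : ∑ i ∈ Finset.Icc 1 N, (z⁻¹ ^ t) ^ i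
        = z⁻¹ ^ t * ∑ i ∈ Finset.range N, (z⁻¹ ^ t) ^ i := by
      have h5 := Finset.sum_Ico_add' (fun i => (z⁻¹ ^ t) ^ i) 0 N 1
      rw [Finset.mul_sum, Finset.range_eq_Ico, ← Finset.Ico_succ_right_eq_Icc]
      refine Eq.trans h5.symm ?_
      exact Finset.sum_congr rfl fun i _ => pow_succ' _ _
    split_ifs with h
    · subst h; simp
    · have h1 : z⁻¹ ^ t ≠ 1 := (hz.inv).pow_ne_one_of_pos_of_lt h (Finset.mem_range.mp ht)
      have h2 := mul_geom_sum (z⁻¹ ^ t) N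
      have h6 : (z⁻¹ ^ t) ^ N = 1 := by
        rw [← pow_mul, mul_comm, pow_mul, hz.inv.pow_eq_one, one_pow]
      rw [h6, sub_self] at h2
      rw [hs, (mul_eq_zero.mp h2).resolve_left (sub_ne_zero.mpr h1)]
      simp
  unfold Pr
  rw [← Finset.smul_sum, Finset.sum_comm, Finset.sum_congr rfl key]
  simp [Finset.sum_ite_eq', hN, smul_smul, hNk]

/-- the two projections of an involution -/
def Sg (k : Type) [Field k] {A : Type} [Ring A] [Algebra k A] (s : A) (j : ℕ) : A :=
  if j = 0 then (2 : k)⁻¹ • (1 + s) else (2 : k)⁻¹ • (1 - s)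

theorem s_mul_Sg {s : A} (hs : s * s = 1) {j : ℕ} (hj : j ≤ 1) :
    s * Sg k s j = ((-1 : k) ^ j) • Sg k s j := by
  interval_cases j
  · simp [Sg, mul_add, hs, add_comm]
  · simp [Sg, mul_sub, hs, ← smul_neg]

theorem Sg_idem [CharZero k] {s : A} (hs : s * s = 1) {j : ℕ} (hj : j ≤ 1) :
    Sg k s j * Sg k s j = Sg k s j := by
  have h : (2 : k)⁻¹ + (2 : k)⁻¹ = 1 := by norm_num
  have e := s_mul_Sg (k := k) hs hj
  have : (2 : k)⁻¹ • (Sg k s j + Sg k s j) = Sg k s j := by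
    rw [smul_add, ← add_smul, h, one_smul]
  conv_lhs => enter [1]; rw [Sg]
  interval_cases j
  · simp only [if_true, smul_mul_assoc, add_mul, e, one_mul, pow_zero, one_smul]
    exact this
  · simp only [one_ne_zero, if_false, smul_mul_assoc, sub_mul, e, one_mul, pow_one, neg_smul, one_smul,
      sub_neg_eq_add]
    exact this

theorem Sg_orth {s : A} (hs : s * s = 1) {i j : ℕ} (hi : i ≤ 1) (hj : j ≤ 1) (hij : i ≠ j) :
    Sg k s i * Sg k s j = 0 := by
  have e := s_mul_Sg (k := k) hs hj
  conv_lhs => enter [1]; rw [Sg]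
  interval_cases i <;> interval_cases j
  · exact absurd rfl hij
  · simp only [if_true, smul_mul_assoc, add_mul, e, one_mul, pow_one, neg_smul, one_smul,
      add_neg_cancel, smul_zero]
  · simp only [one_ne_zero, if_false, smul_mul_assoc, sub_mul, e, one_mul, pow_zero, one_smul, sub_self,
      smul_zero]
  · exact absurd rfl hij

theorem Sg_sum [CharZero k] (s : A) : ∑ j ∈ Finset.range 2, Sg k s j = 1 := by
  have h : (2 : k)⁻¹ + (2 : k)⁻¹ = 1 := by norm_num
  simp only [Finset.sum_range_succ, Finset.sum_range_zero, zero_add, Sg, if_true, one_ne_zero, if_false]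
  rw [← smul_add, add_add_sub_cancel, smul_add, ← add_smul, h, one_smul]

theorem Sg_mem (S : Subalgebra k A) {s : A} (hs : s ∈ S) (j : ℕ) : Sg k s j ∈ S := by
  unfold Sg
  split_ifs
  · exact S.smul_mem (S.add_mem S.one_mem hs) _
  · exact S.smul_mem (S.sub_mem S.one_mem hs) _

/-- If every element of `S` acts by a scalar on `e`, then `e` is primitive in `S`. -/
theorem prim (S : Subalgebra k A) {e : A} (h : ∀ x ∈ S, ∃ c : k, x * e = c • e) :
    ¬ ∃ a b : A, a ∈ S ∧ b ∈ S ∧ a ≠ 0 ∧ b ≠ 0 ∧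
        a * a = a ∧ b * b = b ∧ a * b = 0 ∧ b * a = 0 ∧ e = a + b := by
  rintro ⟨a, b, ha, hb, ha0, hb0, haa, hbb, hab, hba, rfl⟩
  obtain ⟨c, hc⟩ := h a ha
  rw [mul_add, haa, hab, add_zero] at hc
  have h1 : c • b = 0 := by
    have := congrArg (b * ·) hc
    simp only [mul_smul_comm, mul_add, hba, hbb, zero_add] at this
    exact this.symm
  rcases smul_eq_zero.mp h1 with h2 | h2
  · rw [h2, zero_smul] at hc; exact ha0 hc
  · exact hb0 h2

theorem scalar_adjoin {K H e : A} (hK : ∃ c : k, K * e = c • e) (hH : ∃ c : k, H * e = c • e) :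
    ∀ x ∈ Algebra.adjoin k {K, H}, ∃ c : k, x * e = c • e := by
  intro x hx
  induction hx using Algebra.adjoin_induction with
  | mem x hx => rcases hx with rfl | rfl <;> assumption
  | algebraMap r => exact ⟨r, (Algebra.smul_def _ _).symm⟩
  | add x y _ _ h1 h2 =>
    obtain ⟨c, hc⟩ := h1
    obtain ⟨d, hd⟩ := h2
    exact ⟨c + d, by rw [add_mul, hc, hd, add_smul]⟩
  | mul x y _ _ h1 h2 =>
    obtain ⟨c, hc⟩ := h1
    obtain ⟨d, hd⟩ := h2
    exact ⟨d * c, by rw [mul_assoc, hd, mul_smul_comm, hc, smul_smul]⟩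

/-- The group-theoretic identities. -/
theorem grp {M : Type} [Monoid M] (m : ℕ) (hm : 0 < m) (K H : M) (hc : Commute K H)
    (hK : K ^ (4 * m) = 1) (hH : H ^ (4 * m) = (K ^ (4 * m - 1)) ^ 2) :
    (K ^ (4 * m - 1) * H) ^ (8 * m ^ 2) = 1 ∧ (K * H ^ (2 * m)) * (K * H ^ (2 * m)) = 1 ∧
    K * (K ^ (4 * m - 1) * H) ^ (2 * m) = K * H ^ (2 * m) * (K ^ (4 * m - 1) * H) ^ (4 * m ^ 2) ∧
    K ^ (4 * m - 1) * H * K = H := by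
  have hKL : K * K ^ (4 * m - 1) = 1 := by
    rw [← pow_succ', Nat.sub_add_cancel (by omega), hK]
  have hL : (K ^ (4 * m - 1)) ^ (4 * m) = 1 := by rw [← pow_mul, mul_comm, pow_mul, hK, one_pow]
  have cKL : Commute K (K ^ (4 * m - 1)) := Commute.pow_right (Commute.refl K) _
  have cLH : Commute (K ^ (4 * m - 1)) H := hc.pow_left _
  generalize K ^ (4 * m - 1) = L at *
  have h4 : (L * H) ^ (4 * m ^ 2) = L ^ (2 * m) := by
    rw [cLH.mul_pow, show 4 * m ^ 2 = (4 * m) * m by ring, pow_mul L (4 * m), pow_mul H (4 * m),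
      hL, hH, one_pow, one_mul, ← pow_mul]
  refine ⟨?_, ?_, ?_, ?_⟩
  · rw [show 8 * m ^ 2 = (4 * m ^ 2) * 2 by ring, pow_mul, h4, ← pow_mul,
      show 2 * m * 2 = 4 * m by ring, hL]
  · rw [← sq, (hc.pow_right _).mul_pow, ← pow_mul, show 2 * m * 2 = 4 * m by ring, hH,
      ← cKL.mul_pow, hKL, one_pow]
  · rw [h4, cLH.mul_pow, mul_assoc, (cLH.pow_pow _ _).eq]
  · rw [mul_assoc, ← hc.eq, ← mul_assoc, ← cKL.eq, hKL, one_mul]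

/-- diagonal operator -/
def opD (d : ℕ → k) : Module.End k (ℕ → k) where
  toFun f := fun m => d m * f m
  map_add' f g := by ext m; simp [mul_add]
  map_smul' c f := by ext m; simp [mul_left_comm]

/-- raising operator, cut off at multiples of `N` -/
def opE (k : Type) [Field k] (N : ℕ) : Module.End k (ℕ → k) where
  toFun f := fun m => if N ∣ m then 0 else f (m - 1)
  map_add' f g := by ext m; by_cases h : N ∣ m <;> simp [h]
  map_smul' c f := by ext m; by_cases h : N ∣ m <;> simp [h]

/-- lowering operator with coefficients -/
def opF (c : ℕ → k) : Module.End k (ℕ → k) where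
  toFun f := fun m => c (m + 1) * f (m + 1)
  map_add' f g := by ext m; simp [mul_add]
  map_smul' c f := by ext m; simp [mul_left_comm]

theorem opD_apply (d : ℕ → k) (f : ℕ → k) (m : ℕ) : opD d f m = d m * f m := rfl
theorem opE_apply (N : ℕ) (f : ℕ → k) (m : ℕ) :
    opE k N f m = if N ∣ m then 0 else f (m - 1) := rfl
theorem opF_apply (c : ℕ → k) (f : ℕ → k) (m : ℕ) : opF c f m = c (m + 1) * f (m + 1) := rfl

theorem opD_mul (d d' : ℕ → k) : opD d * opD d' = opD (fun m => d m * d' m) := by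
  ext f m; simp [opD_apply, mul_assoc, Module.End.mul_apply]

theorem opD_one : opD (fun _ => (1 : k)) = 1 := by
  ext f m; simp [opD_apply]

theorem opD_pow (d : ℕ → k) (r : ℕ) : opD d ^ r = opD (fun m => d m ^ r) := by
  induction r with
  | zero => simp [opD_one]
  | succ r ih => rw [pow_succ, ih, opD_mul]; simp [pow_succ]

theorem opE_pow {N : ℕ} (hN : 0 < N) (r : ℕ) (hr : r ≤ N) (f : ℕ → k) (m : ℕ) (h : m % N < r) :
    (opE k N ^ r) f m = 0 := by
  induction r generalizing m with
  | zero => omega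
  | succ r ih =>
    rw [pow_succ', Module.End.mul_apply, opE_apply]
    split_ifs with hd
    · rfl
    · apply ih (by omega)
      have h0 : m % N ≠ 0 := fun h => hd (Nat.dvd_of_mod_eq_zero h)
      have h1 := Nat.div_add_mod m N
      have h2 : m - 1 = (m % N - 1) + N * (m / N) := by omega
      rw [h2, Nat.add_mul_mod_self_left, Nat.mod_eq_of_lt (by omega)]
      omega

theorem opF_pow (c : ℕ → k) (r : ℕ) (f : ℕ → k) (m : ℕ)
    (h : ∃ s, s < r ∧ c (m + 1 + s) = 0) : (opF c ^ r) f m = 0 := by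
  induction r generalizing m with
  | zero => obtain ⟨s, hs, _⟩ := h; omega
  | succ r ih =>
    rw [pow_succ', Module.End.mul_apply, opF_apply]
    obtain ⟨s, hs, hc⟩ := h
    rcases Nat.eq_zero_or_pos s with rfl | h0
    · rw [add_zero] at hc; rw [hc, zero_mul]
    · rw [ih (m + 1) ⟨s - 1, by omega, by rw [← hc]; congr 1; omega⟩, mul_zero]

theorem conj_of {X K L : A} {a : k} (h : K * X = a • (X * K)) (hKL : K * L = 1) :
    K * X * L = a • X := by
  rw [h, smul_mul_assoc, mul_assoc, hKL, mul_one]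

theorem D_E (N : ℕ) (x a : k) :
    opD (fun m => x * a ^ m) * opE k N = a • (opE k N * opD (fun m => x * a ^ m)) := by
  ext f m
  simp only [Module.End.mul_apply, opD_apply, opE_apply, LinearMap.smul_apply, Pi.smul_apply,
    smul_eq_mul]
  split_ifs with h
  · simp
  · have h0 : m ≠ 0 := fun h' => h (h' ▸ dvd_zero _)
    obtain ⟨r, rfl⟩ := Nat.exists_eq_succ_of_ne_zero h0
    simp only [Nat.succ_eq_add_one, Nat.add_sub_cancel]
    ring

theorem D_F (c : ℕ → k) (x a : k) (ha : a ≠ 0) :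
    opD (fun m => x * a ^ m) * opF c = a⁻¹ • (opF c * opD (fun m => x * a ^ m)) := by
  ext f m
  simp only [Module.End.mul_apply, opD_apply, opF_apply, LinearMap.smul_apply, Pi.smul_apply,
    smul_eq_mul]
  field_simp
  ring

theorem exists_rep (n : ℕ) (hn : 1 < n) (q : k) (hq : IsPrimitiveRoot q (n ^ 2)) (x y : k)
    (hx : x ^ n = 1) (hy : y ^ n = (x ^ (n - 1)) ^ 2) :
    ∃ ρ : QFL.U k n q →ₐ[k] Module.End k (ℕ → k),
      ρ (QFL.K k n q) = opD (fun m => x * (q ^ n) ^ m) ∧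
      ρ (QFL.Kh k n q) = opD (fun m => y * (q ^ n * (q ^ 2)⁻¹) ^ m) := by
  have hn2 : 1 < n ^ 2 := Nat.one_lt_pow two_ne_zero hn
  have hq0 : q ≠ 0 := hq.ne_zero (by omega)
  have hq1 : q ≠ 1 := hq.ne_one hn2
  have hqn : (q ^ n) ^ n = 1 := by rw [← pow_mul, ← sq, hq.pow_eq_one]
  have hqn1 : q ^ n * (q ^ n) ^ (n - 1) = 1 := by
    rw [← pow_succ', Nat.sub_add_cancel (by omega), hqn]
  obtain ⟨l, hl⟩ : ∃ l, l = x ^ (n - 1) * y := ⟨_, rfl⟩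
  obtain ⟨c, hc⟩ : ∃ c : ℕ → k,
    c = fun m => (1 - q⁻¹ ^ m) * (1 - l * q * q⁻¹ ^ m) / (1 - q⁻¹) := ⟨_, rfl⟩
  have hc0 : ∀ m, n ^ 2 ∣ m → c m = 0 := by
    rintro m ⟨r, rfl⟩
    simp [hc, pow_mul, hq.pow_eq_one]
  have hq2 : 1 - q⁻¹ ≠ 0 := by
    rw [sub_ne_zero]; intro h; exact hq1 (by simpa using h.symm)
  have hcrec : ∀ m, c (m + 1) - q⁻¹ * c m = 1 - l * (q⁻¹ ^ 2) ^ m := by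
    intro m
    have e : l * q * q⁻¹ ^ (m + 1) = l * q⁻¹ ^ m := by
      rw [pow_succ, mul_comm (q⁻¹ ^ m), mul_assoc, mul_inv_cancel_left₀ hq0]
    have e2 : q * q⁻¹ = 1 := mul_inv_cancel₀ hq0
    simp only [hc, e]
    rw [← pow_mul, mul_comm 2 m, pow_mul, pow_succ]
    generalize q⁻¹ ^ m = t at *
    generalize q⁻¹ = p at *
    rw [← mul_div_assoc, ← sub_div, div_eq_iff hq2]
    linear_combination (-l * t * (t - 1)) * e2
  obtain ⟨d1, h1⟩ : ∃ d, d = opD (fun m => x * (q ^ n) ^ m) := ⟨_, rfl⟩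
  obtain ⟨d2, h2⟩ : ∃ d, d = opD (fun m => y * (q ^ n * (q ^ 2)⁻¹) ^ m) := ⟨_, rfl⟩
  have hb0 : q ^ n * (q ^ 2)⁻¹ ≠ 0 := mul_ne_zero (pow_ne_zero _ hq0) (inv_ne_zero (pow_ne_zero _ hq0))
  have r1 : d1 ^ n = 1 := by
    rw [h1, opD_pow, ← opD_one]; congr 1; ext m
    rw [mul_pow, hx, ← pow_mul, mul_comm m, pow_mul, hqn]; simp
  have r2 : d2 ^ n = (d1 ^ (n - 1)) ^ 2 := by
    rw [h1, h2, opD_pow, opD_pow, opD_pow]; congr 1; ext m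
    have hb : (q ^ n * (q ^ 2)⁻¹) ^ n = ((q ^ n) ^ (n - 1)) ^ 2 := by
      rw [mul_pow, hqn, one_mul, eq_inv_of_mul_eq_one_right hqn1, inv_pow, inv_pow, ← pow_mul,
        ← pow_mul, mul_comm 2]
    calc (y * (q ^ n * (q ^ 2)⁻¹) ^ m) ^ n = y ^ n * ((q ^ n * (q ^ 2)⁻¹) ^ n) ^ m := by
          rw [mul_pow y, ← pow_mul, ← pow_mul (q ^ n * (q ^ 2)⁻¹) n, mul_comm m]
      _ = ((x * (q ^ n) ^ m) ^ (n - 1)) ^ 2 := by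
          rw [hb, hy]; generalize q ^ n = w; ring
  have r3 : d1 * d2 = d2 * d1 := by
    rw [h1, h2, opD_mul, opD_mul]; congr 1; ext m; ring
  have i1 : d1 * d1 ^ (n - 1) = 1 := by
    rw [← pow_succ', Nat.sub_add_cancel (by omega), r1]
  have i2 : d2 * d2 ^ (n ^ 2 - 1) = 1 := by
    rw [← pow_succ', Nat.sub_add_cancel (by omega), sq n, pow_mul, r2, ← pow_mul, ← pow_mul,
      show (n - 1) * (2 * n) = n * ((n - 1) * 2) by ring, pow_mul, r1, one_pow]
  have r10 : opF c * opE k (n ^ 2) - q⁻¹ • (opE k (n ^ 2) * opF c) = 1 - d1 ^ (n - 1) * d2 := by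
    rw [h1, h2, opD_pow, opD_mul]
    ext f m
    simp only [Module.End.mul_apply, opD_apply, opF_apply, opE_apply, LinearMap.smul_apply,
      Pi.smul_apply, smul_eq_mul, LinearMap.sub_apply, Pi.sub_apply, Module.End.one_apply,
      Nat.add_sub_cancel]
    have t1 : c (m + 1) * (if n ^ 2 ∣ m + 1 then 0 else f m) = c (m + 1) * f m := by
      split_ifs with h
      · rw [hc0 _ h]; simp
      · rfl
    have t2 : (if n ^ 2 ∣ m then 0 else c (m - 1 + 1) * f (m - 1 + 1)) = c m * f m := by
      split_ifs with h
      · rw [hc0 _ h]; simp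
      · have h0 : m ≠ 0 := fun h' => h (h' ▸ dvd_zero _)
        rw [Nat.sub_add_cancel (by omega)]
    rw [t1, t2]
    have t3 : (x * (q ^ n) ^ m) ^ (n - 1) * (y * (q ^ n * (q ^ 2)⁻¹) ^ m) = l * (q⁻¹ ^ 2) ^ m := by
      rw [hl, mul_pow, mul_mul_mul_comm]
      congr 1
      rw [← pow_mul (q ^ n), mul_comm m, pow_mul, ← mul_pow, ← mul_assoc, mul_comm _ (q ^ n), hqn1,
        one_mul, inv_pow q]
    rw [t3]
    linear_combination (f m) * hcrec m
  have key : ∀ ⦃u v⦄, QFL.Rel k n q u v →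
      (FreeAlgebra.lift k ![d1, d2, opE k (n ^ 2), opF c]) u =
      (FreeAlgebra.lift k ![d1, d2, opE k (n ^ 2), opF c]) v := by
    intro u v h
    have e0 : (FreeAlgebra.lift k ![d1, d2, opE k (n ^ 2), opF c]) (FreeAlgebra.ι k (0 : Fin 4)) = d1 := by
      rw [FreeAlgebra.lift_ι_apply]; rfl
    have e1 : (FreeAlgebra.lift k ![d1, d2, opE k (n ^ 2), opF c]) (FreeAlgebra.ι k (1 : Fin 4)) = d2 := by
      rw [FreeAlgebra.lift_ι_apply]; rfl
    have e2 : (FreeAlgebra.lift k ![d1, d2, opE k (n ^ 2), opF c]) (FreeAlgebra.ι k (2 : Fin 4)) =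
        opE k (n ^ 2) := by
      rw [FreeAlgebra.lift_ι_apply]; rfl
    have e3 : (FreeAlgebra.lift k ![d1, d2, opE k (n ^ 2), opF c]) (FreeAlgebra.ι k (3 : Fin 4)) =
        opF c := by
      rw [FreeAlgebra.lift_ι_apply]; rfl
    cases h <;> simp only [map_pow, map_mul, map_sub, map_one, map_zero, map_smul, e0, e1, e2, e3]
    · exact r1
    · exact r2
    · exact r3
    · exact conj_of (by rw [h1]; exact D_E _ _ _) i1
    · exact conj_of (by rw [h1]; exact D_F _ _ _ (pow_ne_zero _ hq0)) i1
    · exact conj_of (by rw [h2]; exact D_E _ _ _) i2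
    · refine conj_of ?_ i2
      have := D_F c y _ hb0
      rw [mul_inv, inv_inv] at this
      rw [h2]; exact this
    · ext f m
      exact opE_pow (by omega) _ le_rfl f m (Nat.mod_lt _ (by omega))
    · ext f m
      refine opF_pow c _ f m ⟨n ^ 2 - 1 - m % n ^ 2, Nat.lt_of_le_of_lt (Nat.sub_le _ _) (by omega), hc0 _ ?_⟩
      have h5 := Nat.div_add_mod m (n ^ 2)
      have h6 := Nat.mod_lt m (show 0 < n ^ 2 by omega)
      refine ⟨m / n ^ 2 + 1, ?_⟩
      rw [mul_add, mul_one]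
      omega
    · exact r10
  refine ⟨RingQuot.liftAlgHom k ⟨_, key⟩, ?_, ?_⟩
  · rw [QFL.K, RingQuot.liftAlgHom_mkAlgHom_apply, FreeAlgebra.lift_ι_apply, ← h1]; rfl
  · rw [QFL.Kh, RingQuot.liftAlgHom_mkAlgHom_apply, FreeAlgebra.lift_ι_apply, ← h2]; rfl

/-- `T` acts on the value at `0` by the scalar `c`. -/
def Ev (T : Module.End k (ℕ → k)) (c : k) : Prop := ∀ f, T f 0 = c * f 0

theorem Ev.mul {T T' : Module.End k (ℕ → k)} {c c' : k} (h : Ev T c) (h' : Ev T' c') :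
    Ev (T * T') (c * c') := fun f => by
  rw [Module.End.mul_apply, h, h', mul_assoc]

theorem Ev.one : Ev (1 : Module.End k (ℕ → k)) 1 := fun f => by simp

theorem Ev.pow {T : Module.End k (ℕ → k)} {c : k} (h : Ev T c) (r : ℕ) : Ev (T ^ r) (c ^ r) := by
  induction r with
  | zero => simpa using Ev.one
  | succ r ih => rw [pow_succ, pow_succ]; exact ih.mul h

theorem Ev.smul {T : Module.End k (ℕ → k)} {c : k} (h : Ev T c) (a : k) : Ev (a • T) (a * c) :=
  fun f => by simp [h f, mul_assoc]

theorem Ev.Pr [CharZero k] {T : Module.End k (ℕ → k)} {z : k} {i N : ℕ} (h : Ev T (z ^ i))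
    (hN : 0 < N) (hz : z ≠ 0) : Ev (Pr N z T i) 1 := by
  have hNk : (N : k) ≠ 0 := by exact_mod_cast hN.ne'
  intro f
  have : ∀ t, ((z⁻¹ ^ i • T) ^ t) f 0 = f 0 := by
    intro t
    have := (h.smul (z⁻¹ ^ i)).pow t f
    rw [← mul_pow, inv_mul_cancel₀ hz] at this
    simpa using this
  simp only [QFLAux.Pr, LinearMap.smul_apply, LinearMap.sum_apply, Pi.smul_apply, Finset.sum_apply, this]
  simp [hNk]

theorem Ev.Sg [CharZero k] {T : Module.End k (ℕ → k)} {j : ℕ} (hj : j ≤ 1) (h : Ev T ((-1) ^ j)) :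
    Ev (Sg k T j) 1 := by
  intro f
  have := h f
  interval_cases j
  · simp only [QFLAux.Sg, if_true, LinearMap.smul_apply, LinearMap.add_apply, Pi.smul_apply,
      Pi.add_apply, this, Module.End.one_apply, smul_eq_mul]
    ring
  · simp only [QFLAux.Sg, one_ne_zero, if_false, LinearMap.smul_apply, LinearMap.sub_apply,
      Pi.smul_apply, Pi.sub_apply, this, Module.End.one_apply, smul_eq_mul]
    ring

theorem map_Pr {B : Type} [Ring B] [Algebra k B] (ρ : A →ₐ[k] B) (N : ℕ) (z : k) (g : A) (i : ℕ) :
    ρ (Pr N z g i) = Pr N z (ρ g) i := by simp [Pr]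

theorem map_Sg {B : Type} [Ring B] [Algebra k B] (ρ : A →ₐ[k] B) (s : A) (j : ℕ) :
    ρ (Sg k s j) = Sg k (ρ s) j := by unfold Sg; split_ifs <;> simp

/-- The character parameters. -/
theorem params (m : ℕ) (hm : 0 < m) (y e : k) (hy : y ^ (8 * m ^ 2) = 1) (he : e ^ 2 = 1) :
    ∃ x h : k, x ^ (4 * m) = 1 ∧ h ^ (4 * m) = (x ^ (4 * m - 1)) ^ 2 ∧
      x ^ (4 * m - 1) * h = y ∧ x * h ^ (2 * m) = e := by
  have hy0 : y ≠ 0 := by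
    rintro rfl
    rw [zero_pow (by positivity)] at hy
    exact zero_ne_one hy
  have he0 : e ≠ 0 := by rintro rfl; simp at he
  have e2 : ∀ r, e ^ (2 * r) = 1 := fun r => by rw [pow_mul, he, one_pow]
  have y8 : ∀ r, y ^ (8 * m ^ 2 * r) = 1 := fun r => by rw [pow_mul, hy, one_pow]
  obtain ⟨x, hx⟩ : ∃ x, x = e * y ^ (4 * m ^ 2) / y ^ (2 * m) := ⟨_, rfl⟩
  have hx0 : x ≠ 0 := by
    rw [hx]; exact div_ne_zero (mul_ne_zero he0 (pow_ne_zero _ hy0)) (pow_ne_zero _ hy0)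
  have x2 : x ^ 2 = (y ^ (4 * m))⁻¹ := by
    rw [hx, div_pow, mul_pow, he, ← pow_mul, ← pow_mul, show 4 * m ^ 2 * 2 = 8 * m ^ 2 by ring, hy,
      show 2 * m * 2 = 4 * m by ring, one_mul, one_div]
  have x2m : x ^ (2 * m) = (y ^ (4 * m ^ 2))⁻¹ := by
    rw [pow_mul, x2, inv_pow, ← pow_mul]; congr 2; ring
  have x4m : x ^ (4 * m) = 1 := by
    rw [show 4 * m = 2 * m * 2 by ring, pow_mul, x2m, inv_pow, ← pow_mul,
      show 4 * m ^ 2 * 2 = 8 * m ^ 2 by ring, hy, inv_one]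
  have xi : x ^ (4 * m - 1) = x⁻¹ := by
    apply eq_inv_of_mul_eq_one_left
    rw [← pow_succ, Nat.sub_add_cancel (by omega), x4m]
  refine ⟨x, x * y, x4m, ?_, ?_, ?_⟩
  · rw [mul_pow, x4m, xi, inv_pow, x2, inv_inv, one_mul]
  · rw [xi, inv_mul_cancel_left₀ hx0]
  · rw [mul_pow, x2m, hx]
    field_simp

theorem K_pow (n : ℕ) (q : k) : QFL.K k n q ^ n = 1 := by
  have := RingQuot.mkAlgHom_rel k (QFL.Rel.Kord (k := k) (n := n) (q := q))
  simp only [map_pow, map_one] at this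
  exact this

theorem Kh_pow (n : ℕ) (q : k) : QFL.Kh k n q ^ n = (QFL.K k n q ^ (n - 1)) ^ 2 := by
  have := RingQuot.mkAlgHom_rel k (QFL.Rel.Khord (k := k) (n := n) (q := q))
  simp only [map_pow] at this
  exact this

theorem K_comm (n : ℕ) (q : k) : Commute (QFL.K k n q) (QFL.Kh k n q) := by
  have := RingQuot.mkAlgHom_rel k (QFL.Rel.KKh (k := k) (n := n) (q := q))
  simp only [map_mul] at this
  exact this

theorem phi_eq [CharZero k] (m : ℕ) (q : k) (i : ℕ) : QFL.phi k (4 * m) q i =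
    Pr (8 * m ^ 2) (q ^ 2) (QFL.K k (4 * m) q ^ (4 * m - 1) * QFL.Kh k (4 * m) q) i := by
  unfold QFL.phi Pr QFL.Kinv
  have h1 : (4 * m) ^ 2 / 2 = 8 * m ^ 2 := by
    rw [show (4 * m) ^ 2 = 2 * (8 * m ^ 2) by ring]; simp
  have h2 : (((4 * m : ℕ) : k) ^ 2)⁻¹ * 2 = ((8 * m ^ 2 : ℕ) : k)⁻¹ := by
    push_cast
    rw [show (4 * (m : k)) ^ 2 = 2 * (8 * (m : k) ^ 2) by ring, mul_inv, mul_comm, ← mul_assoc,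
      mul_inv_cancel₀ two_ne_zero, one_mul]
  rw [h1, h2]
  congr 1
  refine Finset.sum_congr rfl fun t _ => ?_
  rw [smul_pow, inv_pow (q ^ 2), ← pow_mul q, ← inv_pow, ← pow_mul]

theorem oneJ_eq (m : ℕ) (q : k) (j : ℕ) : QFL.oneJ k (4 * m) q j =
    Sg k (QFL.K k (4 * m) q * QFL.Kh k (4 * m) q ^ (2 * m)) j := by
  unfold QFL.oneJ Sg
  rw [show 4 * m / 2 = 2 * m by omega]

theorem Commute_Pr_Sg {g s : A} (h : Commute g s) (N : ℕ) (z : k) (i j : ℕ) :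
    Commute (Pr N z g i) (Sg k s j) := by
  have h1 : ∀ x : A, Commute g x → Commute (Pr N z g i) x := fun x hx =>
    Commute.smul_left (Commute.sum_left _ _ _ fun t _ => (hx.smul_left _).pow_left t) _
  apply h1
  unfold Sg
  split_ifs
  · exact ((Commute.one_right g).add_right h).smul_right _
  · exact ((Commute.one_right g).sub_right h).smul_right _

theorem main [CharZero k] (m : ℕ) (hm : 0 < m) (K H : A) (hc : Commute K H)
    (hK : K ^ (4 * m) = 1) (hH : H ^ (4 * m) = (K ^ (4 * m - 1)) ^ 2)
    (z : k) (hz : IsPrimitiveRoot z (8 * m ^ 2)) (e : ℕ → ℕ → A)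
    (he : ∀ i j, e i j = Pr (8 * m ^ 2) z (K ^ (4 * m - 1) * H) i * Sg k (K * H ^ (2 * m)) j) :
    (∀ i j : ℕ, 1 ≤ i → i ≤ 8 * m ^ 2 → j ≤ 1 →
      e i j ∈ Algebra.adjoin k {K, H} ∧ e i j * e i j = e i j) ∧
    (∀ i j i' j' : ℕ, 1 ≤ i → i ≤ 8 * m ^ 2 → j ≤ 1 → 1 ≤ i' → i' ≤ 8 * m ^ 2 → j' ≤ 1 →
      (i, j) ≠ (i', j') → e i j * e i' j' = 0) ∧
    (∑ i ∈ Finset.Icc 1 (8 * m ^ 2), ∑ j ∈ Finset.range 2, e i j) = 1 ∧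
    (∀ i j : ℕ, 1 ≤ i → i ≤ 8 * m ^ 2 → j ≤ 1 →
      ¬ ∃ a b : A, a ∈ Algebra.adjoin k {K, H} ∧
        b ∈ Algebra.adjoin k {K, H} ∧ a ≠ 0 ∧ b ≠ 0 ∧
        a * a = a ∧ b * b = b ∧ a * b = 0 ∧ b * a = 0 ∧ e i j = a + b) := by
  obtain ⟨hg, hs, hKg, hgK⟩ := grp m hm K H hc hK hH
  have mK : K ∈ Algebra.adjoin k {K, H} := Algebra.subset_adjoin (by simp)
  have mH : H ∈ Algebra.adjoin k {K, H} := Algebra.subset_adjoin (by simp)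
  have mg : K ^ (4 * m - 1) * H ∈ Algebra.adjoin k {K, H} :=
    Subalgebra.mul_mem _ (Subalgebra.pow_mem _ mK _) mH
  have ms : K * H ^ (2 * m) ∈ Algebra.adjoin k {K, H} :=
    Subalgebra.mul_mem _ mK (Subalgebra.pow_mem _ mH _)
  have cgs : Commute (K ^ (4 * m - 1) * H) (K * H ^ (2 * m)) := by
    apply Commute.mul_left
    · exact (Commute.pow_left (Commute.refl K) _).mul_right (hc.pow_pow _ _)
    · exact hc.symm.mul_right ((Commute.refl H).pow_right _)
  generalize K ^ (4 * m - 1) * H = g at *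
  generalize K * H ^ (2 * m) = s at *
  have hN : 0 < 8 * m ^ 2 := by positivity
  have hz0 : z ≠ 0 := hz.ne_zero hN.ne'
  have hz1 := hz.pow_eq_one
  have cm : ∀ i j, Commute (Pr (8 * m ^ 2) z g i) (Sg k s j) := Commute_Pr_Sg cgs _ _
  have mm : ∀ i j i' j', e i j * e i' j' =
      (Pr (8 * m ^ 2) z g i * Pr (8 * m ^ 2) z g i') * (Sg k s j * Sg k s j') := by
    intro i j i' j'
    rw [he, he]
    exact (cm i' j).symm.mul_mul_mul_comm _ _
  refine ⟨?_, ?_, ?_, ?_⟩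
  · intro i j _ _ hj
    constructor
    · rw [he]; exact Subalgebra.mul_mem _ (Pr_mem _ mg _ _ _) (Sg_mem _ ms _)
    · rw [mm, Pr_idem hN hz0 hz1 hg, Sg_idem hs hj, he]
  · intro i j i' j' hi1 hi2 hj hi1' hi2' hj' hne
    rw [mm]
    by_cases hjj : j = j'
    · have hii : i ≠ i' := by rintro rfl; exact hne (by rw [hjj])
      rw [Pr_orth hz0 hz1 hg, zero_mul]
      intro h
      apply hii
      have h2 : z ^ (i - 1) = z ^ (i' - 1) := by
        apply mul_left_cancel₀ hz0
        rw [← pow_succ', ← pow_succ', Nat.sub_add_cancel hi1, Nat.sub_add_cancel hi1', h]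
      have := hz.pow_inj (by omega) (by omega) h2
      omega
    · rw [Sg_orth hs hj hj' hjj, mul_zero]
  · simp_rw [he, ← Finset.mul_sum, Sg_sum, mul_one]
    exact Pr_sum g hN hz
  · intro i j _ _ hj
    apply prim
    have hge : ∀ t, g ^ t * e i j = (z ^ i) ^ t • e i j := by
      intro t
      rw [he, ← mul_assoc, gpow_mul_Pr hz0 hz1 hg, smul_mul_assoc]
    have hse : s * e i j = ((-1 : k) ^ j) • e i j := by
      rw [he, (cm i j).eq, ← mul_assoc, s_mul_Sg hs hj, smul_mul_assoc]
    have hKe : ∃ c : k, K * e i j = c • e i j := by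
      refine ⟨((z ^ i) ^ (2 * m))⁻¹ * ((z ^ i) ^ (4 * m ^ 2) * (-1) ^ j), ?_⟩
      have h1 := congrArg (· * e i j) hKg
      simp only [mul_assoc, hge, mul_smul_comm, hse] at h1
      rw [mul_smul, mul_smul, ← h1, inv_smul_smul₀ (pow_ne_zero _ (pow_ne_zero _ hz0))]
    apply scalar_adjoin hKe
    obtain ⟨c, hKc⟩ := hKe
    refine ⟨c * z ^ i, ?_⟩
    have := hge 1
    rw [pow_one, pow_one] at this
    rw [← hgK, mul_assoc, hKc, mul_smul_comm, this, smul_smul]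

end QFLAux

open QFL in
/-- The `e_{2i,j}` form a complete set of primitive orthogonal idempotents of the
subalgebra `u⁰` of `ũ_q(sl₂)` generated by `K` and `K̂`. -/
theorem statement0 (k : Type) [Field k] [IsAlgClosed k] [CharZero k]
    (n : ℕ) (hn : 0 < n) (h4 : 4 ∣ n) (q : k) (hq : IsPrimitiveRoot q (n ^ 2)) :
    (∀ i j : ℕ, 1 ≤ i → i ≤ n ^ 2 / 2 → j ≤ 1 →
      eIdem k n q i j ∈ Algebra.adjoin k {K k n q, Kh k n q} ∧
      eIdem k n q i j ≠ 0 ∧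
      eIdem k n q i j * eIdem k n q i j = eIdem k n q i j) ∧
    (∀ i j i' j' : ℕ, 1 ≤ i → i ≤ n ^ 2 / 2 → j ≤ 1 → 1 ≤ i' → i' ≤ n ^ 2 / 2 → j' ≤ 1 →
      (i, j) ≠ (i', j') → eIdem k n q i j * eIdem k n q i' j' = 0) ∧
    (∑ i ∈ Finset.Icc 1 (n ^ 2 / 2), ∑ j ∈ Finset.range 2, eIdem k n q i j) = 1 ∧
    (∀ i j : ℕ, 1 ≤ i → i ≤ n ^ 2 / 2 → j ≤ 1 →
      ¬ ∃ a b : U k n q, a ∈ Algebra.adjoin k {K k n q, Kh k n q} ∧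
        b ∈ Algebra.adjoin k {K k n q, Kh k n q} ∧ a ≠ 0 ∧ b ≠ 0 ∧
        a * a = a ∧ b * b = b ∧ a * b = 0 ∧ b * a = 0 ∧ eIdem k n q i j = a + b) := by
  obtain ⟨m, rfl⟩ := h4
  have hm : 0 < m := by omega
  have h1 : (4 * m) ^ 2 / 2 = 8 * m ^ 2 := by
    rw [show (4 * m) ^ 2 = 2 * (8 * m ^ 2) by ring]; simp
  have hz : IsPrimitiveRoot (q ^ 2) (8 * m ^ 2) :=
    hq.pow (by positivity) (show (4 * m) ^ 2 = 2 * (8 * m ^ 2) by ring)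
  have hN : 0 < 8 * m ^ 2 := by positivity
  have hz0 : q ^ 2 ≠ 0 := hz.ne_zero hN.ne'
  have he : ∀ i j, eIdem k (4 * m) q i j =
      QFLAux.Pr (8 * m ^ 2) (q ^ 2) (K k (4 * m) q ^ (4 * m - 1) * Kh k (4 * m) q) i *
      QFLAux.Sg k (K k (4 * m) q * Kh k (4 * m) q ^ (2 * m)) j := fun i j => by
    rw [eIdem, QFLAux.phi_eq, QFLAux.oneJ_eq]
  obtain ⟨A1, A2, A3, A4⟩ := QFLAux.main m hm (K k (4 * m) q) (Kh k (4 * m) q)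
    (QFLAux.K_comm _ q) (QFLAux.K_pow _ q) (QFLAux.Kh_pow _ q) (q ^ 2) hz (eIdem k (4 * m) q) he
  rw [h1]
  refine ⟨?_, A2, A3, A4⟩
  intro i j hi1 hi2 hj
  refine ⟨(A1 i j hi1 hi2 hj).1, ?_, (A1 i j hi1 hi2 hj).2⟩
  obtain ⟨x, y, hx, hy, hxy, hxs⟩ := QFLAux.params m hm ((q ^ 2) ^ i) ((-1 : k) ^ j)
    (by rw [← pow_mul, mul_comm, pow_mul, hz.pow_eq_one, one_pow])
    (by rw [← pow_mul, mul_comm, pow_mul]; simp)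
  obtain ⟨ρ, hρK, hρH⟩ := QFLAux.exists_rep (4 * m) (by omega) q hq x y hx hy
  have eK : QFLAux.Ev (ρ (K k (4 * m) q)) x := fun f => by
    rw [hρK, QFLAux.opD_apply, pow_zero, mul_one]
  have eH : QFLAux.Ev (ρ (Kh k (4 * m) q)) y := fun f => by
    rw [hρH, QFLAux.opD_apply, pow_zero, mul_one]
  intro h0
  have hev : QFLAux.Ev (ρ (eIdem k (4 * m) q i j)) (1 * 1) := by
    rw [he, map_mul, QFLAux.map_Pr, QFLAux.map_Sg, map_mul, map_pow, map_mul, map_pow]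
    refine QFLAux.Ev.mul (QFLAux.Ev.Pr ?_ hN hz0) (QFLAux.Ev.Sg hj ?_)
    · rw [← hxy]; exact (eK.pow _).mul eH
    · rw [← hxs]; exact eK.mul (eH.pow _)
  have := hev (fun _ => 1)
  rw [h0, map_zero] at this
  simp at this
end
end

section
/- For 1 ≤ i ≤ n²/2, j ∈ {0,1} and 0 ≤ s ≤ n²−1 the following hold in u: K^{-1}K̂·E^sα_{2i,j} = q^{2i−2−2s}·E^sα_{2i,j} and KK̂^{n/2}·E^sα_{2i,j} = (−1)^{s+1+j}·E^sα_{2i,j}; moreover for 1 ≤ s ≤ n²−1, F·E^sα_{2i,j} = s_{q^{-1}}(1 − q^{2i−1−s})·E^{s−1}α_{2i,j}. -/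
noncomputable section

open scoped TensorProduct

namespace QFL

section Generic
variable {k A : Type*} [Field k] [Ring A] [Algebra k A]

theorem aux_comm_of_conj {x y z : A} {c : k} (hz : z * x = 1) (h : x * y * z = c • y) :
    x * y = c • (y * x) := by
  have h2 := congrArg (· * x) h
  simp only [mul_assoc, hz, mul_one] at h2
  rw [h2, smul_mul_assoc]

theorem aux_pow_right {x y : A} {c : k} (h : x * y = c • (y * x)) (m : ℕ) :
    x * y ^ m = c ^ m • (y ^ m * x) := by
  induction m with
  | zero => simp
  | succ m ih =>
    rw [pow_succ, ← mul_assoc, ih, smul_mul_assoc, mul_assoc, h, mul_smul_comm, smul_smul,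
      ← mul_assoc, pow_succ]

theorem aux_pow_left {x y : A} {c : k} (h : x * y = c • (y * x)) (m : ℕ) :
    x ^ m * y = c ^ m • (y * x ^ m) := by
  induction m with
  | zero => simp
  | succ m ih =>
    rw [pow_succ, mul_assoc, h, mul_smul_comm, ← mul_assoc, ih, smul_mul_assoc, smul_smul,
      mul_assoc, ← pow_succ, pow_succ' c]

theorem aux_mul_left {x x' y : A} {c c' : k} (h : x * y = c • (y * x))
    (h' : x' * y = c' • (y * x')) : (x * x') * y = (c * c') • (y * (x * x')) := by
  rw [mul_assoc, h', mul_smul_comm, ← mul_assoc, h, smul_mul_assoc, smul_smul, mul_assoc,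
    mul_comm c']

theorem aux_eig {x y v : A} {c d : k} (h : x * y = c • (y * x)) (hv : x * v = d • v) :
    x * (y * v) = (c * d) • (y * v) := by
  rw [← mul_assoc, h, smul_mul_assoc, mul_assoc, hv, mul_smul_comm, smul_smul]

theorem aux_step {x y g v : A} {p d : k} (h : x * y - p • (y * x) = 1 - g) (hv : g * v = d • v) :
    x * (y * v) = p • (y * (x * v)) + (1 - d) • v := by
  have h' : x * y = p • (y * x) + (1 - g) := by rw [← h]; abel
  rw [← mul_assoc, h', add_mul, sub_mul, hv, one_mul, sub_smul, one_smul, smul_mul_assoc,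
    mul_assoc]

theorem aux_one {c : A} (h : c * c = 1) (a : k) :
    c * (a • (1 - c)) = (-1 : k) • (a • (1 - c)) := by
  rw [mul_smul_comm, mul_sub, h, mul_one, neg_one_smul, ← smul_neg, neg_sub]

theorem aux_phi {G : A} {w : k} {N : ℕ} (hG : G ^ N = 1) (hw : w ^ N = 1) (hw0 : w ≠ 0) :
    G * (∑ t ∈ Finset.range N, w⁻¹ ^ t • G ^ t) = w • ∑ t ∈ Finset.range N, w⁻¹ ^ t • G ^ t := by
  have h1 : ∀ t, G * (w⁻¹ ^ t • G ^ t) = w • (w⁻¹ ^ (t+1) • G ^ (t+1)) := by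
    intro t
    rw [mul_smul_comm, ← pow_succ', smul_smul, pow_succ w⁻¹, mul_comm w, mul_assoc,
      inv_mul_cancel₀ hw0, mul_one]
  rw [Finset.mul_sum]
  simp only [h1]
  rw [← Finset.smul_sum]
  congr 1
  have a := Finset.sum_range_succ (fun t => w⁻¹ ^ t • G ^ t) N
  have b := Finset.sum_range_succ' (fun t => w⁻¹ ^ t • G ^ t) N
  rw [a] at b
  simp only [hG, inv_pow, hw, inv_one, pow_zero] at b ⊢
  exact (add_right_cancel b).symm

end Generic

section Rels
variable (k : Type) [Field k] (n : ℕ) (q : k)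

theorem rK : K k n q ^ n = 1 := by
  have := RingQuot.mkAlgHom_rel k (Rel.Kord (k := k) (n := n) (q := q))
  simp only [map_pow, map_one] at this
  exact this

theorem rKh : Kh k n q ^ n = (K k n q ^ (n - 1)) ^ 2 := by
  have := RingQuot.mkAlgHom_rel k (Rel.Khord (k := k) (n := n) (q := q))
  simp only [map_pow] at this
  exact this

theorem rKKh : K k n q * Kh k n q = Kh k n q * K k n q := by
  have := RingQuot.mkAlgHom_rel k (Rel.KKh (k := k) (n := n) (q := q))
  simp only [map_mul] at this
  exact this

theorem rKE : K k n q * E k n q * K k n q ^ (n - 1) = q ^ n • E k n q := by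
  have := RingQuot.mkAlgHom_rel k (Rel.KE (k := k) (n := n) (q := q))
  simp only [map_mul, map_pow, map_smul] at this
  exact this

theorem rKF : K k n q * F k n q * K k n q ^ (n - 1) = (q ^ n)⁻¹ • F k n q := by
  have := RingQuot.mkAlgHom_rel k (Rel.KF (k := k) (n := n) (q := q))
  simp only [map_mul, map_pow, map_smul] at this
  exact this

theorem rKhE : Kh k n q * E k n q * Kh k n q ^ (n ^ 2 - 1) =
    (q ^ n * (q ^ 2)⁻¹) • E k n q := by
  have := RingQuot.mkAlgHom_rel k (Rel.KhE (k := k) (n := n) (q := q))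
  simp only [map_mul, map_pow, map_smul] at this
  exact this

theorem rKhF : Kh k n q * F k n q * Kh k n q ^ (n ^ 2 - 1) =
    ((q ^ n)⁻¹ * q ^ 2) • F k n q := by
  have := RingQuot.mkAlgHom_rel k (Rel.KhF (k := k) (n := n) (q := q))
  simp only [map_mul, map_pow, map_smul] at this
  exact this

theorem rF : F k n q ^ n ^ 2 = 0 := by
  have := RingQuot.mkAlgHom_rel k (Rel.Fnil (k := k) (n := n) (q := q))
  simp only [map_pow, map_zero] at this
  exact this

theorem rEF : F k n q * E k n q - q⁻¹ • (E k n q * F k n q) =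
    1 - Kinv k n q * Kh k n q := by
  have := RingQuot.mkAlgHom_rel k (Rel.EF (k := k) (n := n) (q := q))
  simp only [map_mul, map_pow, map_smul, map_sub, map_one] at this
  exact this

end Rels

end QFL

open QFL in
/-- Eigenvalue and lowering identities for the vectors `E^s α_{2i,j}` (Corollary 2.6). -/
theorem statement2 (k : Type) [Field k] [IsAlgClosed k] [CharZero k]
    (n : ℕ) (hn : 0 < n) (h4 : 4 ∣ n) (q : k) (hq : IsPrimitiveRoot q (n ^ 2)) :
    ∀ i j s : ℕ, 1 ≤ i → i ≤ n ^ 2 / 2 → j ≤ 1 → s ≤ n ^ 2 - 1 →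
      (Kinv k n q * Kh k n q) * (E k n q ^ s * alpha k n q i j) =
        (q ^ (2 * (i : ℤ) - 2 - 2 * (s : ℤ))) • (E k n q ^ s * alpha k n q i j) ∧
      (K k n q * Kh k n q ^ (n / 2)) * (E k n q ^ s * alpha k n q i j) =
        ((-1 : k) ^ (s + 1 + j)) • (E k n q ^ s * alpha k n q i j) ∧
      (1 ≤ s → F k n q * (E k n q ^ s * alpha k n q i j) =
        (gauss k q⁻¹ s * (1 - q ^ (2 * (i : ℤ) - 1 - (s : ℤ)))) •
          (E k n q ^ (s - 1) * alpha k n q i j)) := by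
  intro i j s hi hi2 hj hs
  obtain ⟨m, rfl⟩ := h4
  set n := 4 * m with hn4
  have hm : 0 < m := by omega
  have hn2 : 0 < n ^ 2 := by positivity
  have hq0 : q ≠ 0 := hq.ne_zero hn2.ne'
  have hqn : q ^ (n ^ 2) = 1 := hq.pow_eq_one
  have hnhalf : n / 2 = 2 * m := by omega
  have hn2half : n ^ 2 / 2 = 8 * m ^ 2 := by
    have : n ^ 2 = 2 * (8 * m ^ 2) := by rw [hn4]; ring
    omega
  have hneg : q ^ (8 * m ^ 2) = -1 := by
    have h := hq.pow (a := 8 * m ^ 2) (b := 2) hn2 (by rw [hn4]; ring)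
    exact h.eq_neg_one_of_two_right
  have rk := rK k n q
  have rkh := rKh k n q
  have rcomm : Commute (K k n q) (Kh k n q) := rKKh k n q
  have hKi : K k n q ^ (n - 1) * K k n q = 1 := by
    rw [← pow_succ, Nat.sub_add_cancel hn, rk]
  have hKh2 : Kh k n q ^ (n ^ 2) = 1 := by
    rw [pow_two n, pow_mul, rkh, ← pow_mul, ← pow_mul,
      show (n - 1) * (2 * n) = n * ((n - 1) * 2) by ring, pow_mul, rk, one_pow]
  have hKhi : Kh k n q ^ (n ^ 2 - 1) * Kh k n q = 1 := by
    rw [← pow_succ, Nat.sub_add_cancel hn2, hKh2]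
  have cKE := aux_comm_of_conj hKi (rKE k n q)
  have cKF := aux_comm_of_conj hKi (rKF k n q)
  have cKhE := aux_comm_of_conj hKhi (rKhE k n q)
  have cKhF := aux_comm_of_conj hKhi (rKhF k n q)
  have hqnn : (q ^ n) ^ (n - 1) = (q ^ n)⁻¹ := by
    refine eq_inv_of_mul_eq_one_left ?_
    rw [← pow_succ, Nat.sub_add_cancel hn, ← pow_mul,
      ← pow_two, hqn]
  set G := Kinv k n q * Kh k n q with hG
  set C := K k n q * Kh k n q ^ (n / 2) with hC
  have cGE : G * E k n q = (q ^ 2)⁻¹ • (E k n q * G) := by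
    have := aux_mul_left (aux_pow_left cKE (n - 1)) cKhE
    rw [hqnn, inv_mul_cancel_left₀ (pow_ne_zero _ hq0)] at this
    exact this
  have cGF : G * F k n q = (q ^ 2) • (F k n q * G) := by
    have := aux_mul_left (aux_pow_left cKF (n - 1)) cKhF
    rw [inv_pow, hqnn, inv_inv, mul_inv_cancel_left₀ (pow_ne_zero _ hq0)] at this
    exact this
  have hnn : (q ^ n) ^ (n / 2) = -1 := by
    rw [← pow_mul, hnhalf, ← hneg, hn4]; congr 1; ring
  have hq2 : (q ^ 2) ^ (n / 2) = q ^ n := by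
    rw [← pow_mul, hnhalf, hn4]; congr 1; ring
  have hqn0 : q ^ n ≠ 0 := pow_ne_zero _ hq0
  have cCE : C * E k n q = (-1 : k) • (E k n q * C) := by
    have := aux_mul_left cKE (aux_pow_left cKhE (n / 2))
    rw [mul_pow, inv_pow, hnn, hq2] at this
    rw [show q ^ n * (-1 * (q ^ n)⁻¹) = -1 by field_simp] at this
    exact this
  have cCF : C * F k n q = (-1 : k) • (F k n q * C) := by
    have := aux_mul_left cKF (aux_pow_left cKhF (n / 2))
    rw [mul_pow, inv_pow, hnn, hq2] at this
    rw [show (q ^ n)⁻¹ * ((-1)⁻¹ * (q ^ n)) = -1 by field_simp] at this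
    exact this
  have hGN : G ^ (n ^ 2 / 2) = 1 := by
    have hc : Commute (Kinv k n q) (Kh k n q) := rcomm.pow_left _
    rw [hG, hc.mul_pow, Kinv, ← pow_mul]
    have e1 : n ^ 2 / 2 = n * (2 * m) := by rw [hn2half, hn4]; ring
    rw [e1, pow_mul (Kh k n q), rkh, ← pow_mul, ← pow_mul,
      show (n - 1) * (n * (2 * m)) = n * ((n - 1) * (2 * m)) by ring,
      show (n - 1) * (2 * (2 * m)) = n * (n - 1) by rw [hn4]; ring, pow_mul, rk,
      pow_mul (K k n q) n (n - 1), rk, one_pow, one_pow, one_mul]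
  have hCC : C * C = 1 := by
    have hc : Commute (K k n q) (Kh k n q ^ (n / 2)) := rcomm.pow_right _
    rw [← pow_two, hC, hc.mul_pow, ← pow_mul, show n / 2 * 2 = n by omega, rkh, ← pow_mul, ← pow_add,
      show 2 + (n - 1) * 2 = n * 2 by omega, pow_mul, rk, one_pow]
  have hGC : Commute C G := by
    have h1 : Commute (K k n q) G := ((Commute.refl _).pow_right _).mul_right rcomm
    have h2 : Commute (Kh k n q) G := (rcomm.symm.pow_right _).mul_right (Commute.refl _)
    exact h1.mul_left (h2.pow_left _)
  have hphi : G * phi k n q i = (q ^ (2 * i)) • phi k n q i := by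
    have h := aux_phi (G := G) (w := q ^ (2 * i)) (N := n ^ 2 / 2) hGN
      (by rw [hn2half, ← pow_mul, show 2 * i * (8 * m ^ 2) = n ^ 2 * i by rw [hn4]; ring,
            pow_mul, hqn, one_pow]) (pow_ne_zero _ hq0)
    have e : phi k n q i = ((n ^ 2 : k)⁻¹ * 2) • ∑ t ∈ Finset.range (n ^ 2 / 2),
        ((q ^ (2 * i))⁻¹) ^ t • G ^ t := by
      rw [phi]
      simp only [pow_mul, inv_pow]
      rfl
    rw [e, mul_smul_comm, h, smul_comm]
  have hCphi : Commute C (phi k n q i) := by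
    rw [phi]
    exact (Commute.sum_right _ _ _ fun t _ => (hGC.pow_right t).smul_right _).smul_right _
  have hone : C * oneJ k n q j = ((-1 : k) ^ j) • oneJ k n q j := by
    rw [oneJ]
    split_ifs with h
    · subst h
      rw [mul_smul_comm, mul_add, hCC, mul_one, pow_zero, one_smul, add_comm]
    · have : j = 1 := by omega
      subst this
      rw [pow_one]
      exact aux_one hCC _
  have hGe : G * eIdem k n q i j = (q ^ (2 * i)) • eIdem k n q i j := by
    rw [eIdem, ← mul_assoc, hphi, smul_mul_assoc]
  have hCe : C * eIdem k n q i j = ((-1 : k) ^ j) • eIdem k n q i j := by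
    rw [eIdem, ← mul_assoc, hCphi.eq, mul_assoc, hone, mul_smul_comm]
  have hGa : G * alpha k n q i j = (q ^ (2 * (i : ℤ) - 2)) • alpha k n q i j := by
    have h := aux_eig (aux_pow_right cGF (n ^ 2 - 1)) hGe
    rw [alpha, h]
    congr 1
    have e2 : (q ^ 2) ^ (n ^ 2 - 1) = (q ^ 2)⁻¹ := by
      refine eq_inv_of_mul_eq_one_left ?_
      rw [← pow_succ, Nat.sub_add_cancel hn2, ← pow_mul,
        mul_comm, pow_mul, hqn, one_pow]
    rw [e2, zpow_sub₀ hq0, div_eq_mul_inv, mul_comm]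
    norm_cast
  have hCa : C * alpha k n q i j = ((-1 : k) ^ (1 + j)) • alpha k n q i j := by
    have h := aux_eig (aux_pow_right cCF (n ^ 2 - 1)) hCe
    have ho : Odd (n ^ 2 - 1) :=
      Nat.Even.sub_odd hn2 (by rw [hn4]; exact ⟨8 * m ^ 2, by ring⟩) odd_one
    rw [alpha, h, ho.neg_one_pow, pow_add, pow_one]
  have hGs : ∀ s : ℕ, G * (E k n q ^ s * alpha k n q i j) =
      (q ^ (2 * (i : ℤ) - 2 - 2 * (s : ℤ))) • (E k n q ^ s * alpha k n q i j) := by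
    intro s
    rw [aux_eig (aux_pow_right cGE s) hGa]
    congr 1
    rw [zpow_sub₀ hq0 _ (2 * (s : ℤ)), div_eq_mul_inv, mul_comm, inv_pow, ← pow_mul]
    norm_cast
  have hFs : ∀ s : ℕ, F k n q * (E k n q ^ (s + 1) * alpha k n q i j) =
        (gauss k q⁻¹ (s + 1) * (1 - q ^ (2 * (i : ℤ) - 1 - ((s + 1 : ℕ) : ℤ)))) •
          (E k n q ^ s * alpha k n q i j) := by
    have step : ∀ s : ℕ, F k n q * (E k n q ^ (s + 1) * alpha k n q i j) =
        q⁻¹ • (E k n q * (F k n q * (E k n q ^ s * alpha k n q i j))) +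
        (1 - q ^ (2 * (i : ℤ) - 2 - 2 * (s : ℤ))) • (E k n q ^ s * alpha k n q i j) := by
      intro s
      rw [pow_succ', mul_assoc]
      exact aux_step (rEF k n q) (hGs s)
    intro s
    induction s with
    | zero =>
      have hFa : F k n q * alpha k n q i j = 0 := by
        rw [alpha, ← mul_assoc, ← pow_succ', Nat.sub_add_cancel hn2, rF, zero_mul]
      rw [step]
      simp only [pow_zero, one_mul, hFa, mul_zero, smul_zero, zero_add, gauss]
      congr 2
      simp
      congr 1
      ring
    | succ s ih =>
      rw [step, ih, mul_smul_comm, ← mul_assoc, ← pow_succ', smul_smul, ← add_smul]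
      congr 1
      have g1 : gauss k q⁻¹ (s + 1 + 1) = q⁻¹ * gauss k q⁻¹ (s + 1) + 1 := by
        simp only [gauss]
        rw [Finset.sum_range_succ' _ (s + 1), Finset.mul_sum]
        simp only [pow_succ', pow_zero]
      have g2 : gauss k q⁻¹ (s + 1 + 1) = gauss k q⁻¹ (s + 1) + q⁻¹ ^ (s + 1) := by
        simp only [gauss]
        rw [Finset.sum_range_succ _ (s + 1)]
      have z1 : q ^ (2 * (i : ℤ) - 1 - ((s + 1 : ℕ) : ℤ)) =
          q * q ^ (2 * (i : ℤ) - 1 - ((s + 1 + 1 : ℕ) : ℤ)) := by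
        rw [← zpow_one_add₀ hq0]; congr 1; push_cast; ring
      have z2 : q ^ (2 * (i : ℤ) - 2 - 2 * ((s + 1 : ℕ) : ℤ)) =
          q⁻¹ ^ (s + 1) * q ^ (2 * (i : ℤ) - 1 - ((s + 1 + 1 : ℕ) : ℤ)) := by
        rw [← zpow_natCast, inv_zpow', ← zpow_add₀ hq0]; congr 1; push_cast; ring
      rw [z1, z2]
      have hqq : q⁻¹ * q = 1 := inv_mul_cancel₀ hq0
      generalize q ^ (2 * (i : ℤ) - 1 - ((s + 1 + 1 : ℕ) : ℤ)) = Z at *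
      generalize gauss k q⁻¹ (s + 1 + 1) = g' at *
      generalize gauss k q⁻¹ (s + 1) = g at *
      linear_combination (-1 : k) * g1 + Z * g2 - g * Z * hqq
  refine ⟨hGs s, ?_, ?_⟩
  · rw [aux_eig (aux_pow_right cCE s) hCa, ← pow_add, add_assoc]
  · intro h1
    obtain ⟨t, rfl⟩ : ∃ t, s = t + 1 := ⟨s - 1, by omega⟩
    exact hFs t
end
end

section
/- For every 1 ≤ i ≤ n²/2 and j ∈ {0,1}, the 2n² elements E^lα_{2i,j} and E^lγ_{2i,j} (0 ≤ l ≤ n²−1) are linearly independent over k. -/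
noncomputable section

open scoped TensorProduct

namespace QFLaux
open QFL

set_option linter.unusedSimpArgs false
set_option linter.unnecessarySeqFocus false

section abstractAlg
variable {k : Type} [Field k] {B : Type} [Ring B] [Algebra k B]

lemma gauss_succ (x : k) (s : ℕ) : gauss k x (s + 1) = gauss k x s + x ^ s := by
  simp [gauss, Finset.sum_range_succ]

lemma gauss_succ' (x : k) (s : ℕ) : gauss k x (s + 1) = x * gauss k x s + 1 := by
  simp [gauss, Finset.sum_range_succ', Finset.mul_sum, pow_succ']

lemma comm_pow_right (c : k) (X Y : B) (h : X * Y = c • (Y * X)) (m : ℕ) :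
    X * Y ^ m = c ^ m • (Y ^ m * X) := by
  induction m with
  | zero => simp
  | succ m ih =>
    rw [pow_succ, ← mul_assoc, ih, smul_mul_assoc, mul_assoc, h, mul_smul_comm, smul_smul,
      mul_assoc, pow_succ]

lemma comm_pow_left (c : k) (X Y : B) (h : X * Y = c • (Y * X)) (m : ℕ) :
    X ^ m * Y = c ^ m • (Y * X ^ m) := by
  induction m with
  | zero => simp
  | succ m ih =>
    rw [pow_succ', mul_assoc, ih, mul_smul_comm, ← mul_assoc, h, smul_mul_assoc, smul_smul,
      mul_assoc, pow_succ]

lemma comm_pow_pow (c : k) (X Y : B) (h : X * Y = c • (Y * X)) (m l : ℕ) :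
    X ^ m * Y ^ l = (c ^ m) ^ l • (Y ^ l * X ^ m) :=
  comm_pow_right _ _ _ (comm_pow_left c X Y h m) l

/-- The formula for `F E^(r+1)`. -/
lemma FE_pow (p : k) (E F g : B) (h1 : F * E - p • (E * F) = 1 - g)
    (h2 : g * E = p ^ 2 • (E * g)) (r : ℕ) :
    F * E ^ (r + 1) = p ^ (r + 1) • (E ^ (r + 1) * F) +
      gauss k p (r + 1) • (E ^ r - p ^ r • (E ^ r * g)) := by
  have h1' : F * E = p • (E * F) + (1 - g) := by rw [← h1]; abel
  induction r with
  | zero => simp [gauss, h1']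
  | succ r ih =>
    rw [pow_succ E (r + 1), ← mul_assoc, ih, gauss_succ' p (r + 1)]
    have e1 : E ^ (r + 1) * F * E = p • (E ^ (r + 2) * F) + (E ^ (r + 1) - E ^ (r + 1) * g) := by
      rw [mul_assoc, h1', mul_add, mul_smul_comm, mul_sub, mul_one, ← mul_assoc, ← pow_succ]
    have e2 : E ^ r * g * E = p ^ 2 • (E ^ (r + 1) * g) := by
      rw [mul_assoc, h2, mul_smul_comm, ← mul_assoc, ← pow_succ]
    rw [add_mul, smul_mul_assoc, smul_mul_assoc, sub_mul, smul_mul_assoc, e1, e2, ← pow_succ]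
    have e3 : gauss k p (r + 1) + p ^ (r + 1) = p * gauss k p (r + 1) + 1 := by
      rw [← gauss_succ, gauss_succ']
    rw [← pow_succ E (r + 1)]
    have e4 : E ^ (r + 1 + 1) = E ^ (r + 2) := rfl
    rw [e4, ← e3]
    match_scalars
    · ring
    · ring
    · linear_combination (p ^ (r + 1)) * e3

lemma FE_pow_N (p : k) (E F g : B) (h1 : F * E - p • (E * F) = 1 - g)
    (h2 : g * E = p ^ 2 • (E * g)) (N : ℕ) (hN : 0 < N) (hp : p ^ N = 1)
    (hg : gauss k p N = 0) : F * E ^ N = E ^ N * F := by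
  obtain ⟨r, rfl⟩ : ∃ r, N = r + 1 := ⟨N - 1, by omega⟩
  rw [FE_pow p E F g h1 h2, hp, hg]; simp

/-- `E F^(a+1) ∈ q^(a+1) F^(a+1) E + F^a (k + k g)`. -/
lemma EF_pow (q c : k) (hq : q ≠ 0) (E F g : B) (h1 : F * E - q⁻¹ • (E * F) = 1 - g)
    (h2 : g * F = c • (F * g)) (a : ℕ) :
    ∃ c1 c2 : k, E * F ^ (a + 1) = q ^ (a + 1) • (F ^ (a + 1) * E) +
      F ^ a * (c1 • 1 + c2 • g) := by
  have h1' : E * F = q • (F * E) + ((-q) • 1 + q • g) := by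
    have : q • (F * E - q⁻¹ • (E * F)) = q • (1 - g) := by rw [h1]
    rw [smul_sub, smul_smul, mul_inv_cancel₀ hq, one_smul] at this
    rw [sub_eq_iff_eq_add] at this
    rw [this, smul_sub, neg_smul]; abel
  induction a with
  | zero => exact ⟨-q, q, by simp [h1']⟩
  | succ a ih =>
    obtain ⟨c1, c2, ih⟩ := ih
    refine ⟨q ^ (a + 1) * (-q) + c1, q ^ (a + 1) * q + c2 * c, ?_⟩
    rw [pow_succ F (a + 1), ← mul_assoc, ih, add_mul, smul_mul_assoc, mul_assoc (F ^ (a + 1)), h1']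
    have e : F ^ a * (c1 • 1 + c2 • g) * F = F ^ (a + 1) * (c1 • 1 + (c2 * c) • g) := by
      rw [mul_assoc, add_mul, smul_mul_assoc, one_mul, smul_mul_assoc, h2, pow_succ, mul_assoc,
        mul_add, mul_add, mul_add, mul_smul_comm, mul_smul_comm, mul_smul_comm, mul_smul_comm,
        mul_smul_comm, mul_smul_comm, mul_one, smul_smul, mul_smul_comm]
    rw [e]
    simp only [mul_add, mul_smul_comm, mul_one, pow_succ, mul_assoc, smul_add, smul_smul, add_smul]
    module

lemma gauss_zero_of {p : k} {N : ℕ} (hp : p ^ N = 1) (h1 : p ≠ 1) : gauss k p N = 0 := by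
  have := geom_sum_mul p N
  rw [hp, sub_self] at this
  exact (mul_eq_zero.mp this).resolve_right (sub_ne_zero.mpr h1)

lemma gauss_ne {p : k} {N r : ℕ} (hp : IsPrimitiveRoot p N) (h0 : 0 < r) (hr : r < N) :
    gauss k p r ≠ 0 := by
  intro h
  have := geom_sum_mul p r
  rw [show ∑ i ∈ Finset.range r, p ^ i = 0 from h, zero_mul] at this
  exact hp.pow_ne_one_of_pos_of_lt h0.ne' hr (sub_eq_zero.mp this.symm)

end abstractAlg

section rep
variable {k : Type} [Field k] {A : Type} [Ring A] [Algebra k A]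
variable (N n : ℕ) (q : k) (x y : A)

/-- the underlying space of the representations -/
abbrev Mod (N : ℕ) (A : Type) := Fin N → Fin N → A

def opF : Module.End k (Mod N A) where
  toFun f a b := if 1 ≤ a.1 then f ⟨a.1 - 1, by omega⟩ b else 0
  map_add' f g := by funext a b; simp only [Pi.add_apply]; split_ifs <;> simp
  map_smul' c f := by funext a b; simp only [Pi.smul_apply, RingHom.id_apply]; split_ifs <;> simp

def cc (a b : ℕ) : A := gauss k q a • ((q ^ a * q⁻¹ ^ (2 * b)) • (x ^ (n - 1) * y) - q • 1)

def opE : Module.End k (Mod N A) where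
  toFun f a b := (if 1 ≤ b.1 then q ^ a.1 • f a ⟨b.1 - 1, by omega⟩ else 0) +
    (if h : a.1 + 1 < N then cc n q x y (a.1 + 1) b.1 * f ⟨a.1 + 1, h⟩ b else 0)
  map_add' f g := by
    funext a b; simp only [Pi.add_apply]; split_ifs <;> simp [mul_add] <;> abel
  map_smul' c f := by
    funext a b; simp only [Pi.smul_apply, RingHom.id_apply]
    split_ifs <;> simp [smul_comm c]

def opS (s t : k) (z : A) : Module.End k (Mod N A) where
  toFun f a b := (s ^ b.1 * t ^ a.1) • (z * f a b)
  map_add' f g := by funext a b; simp [mul_add]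
  map_smul' c f := by
    funext a b; simp only [Pi.smul_apply, RingHom.id_apply, mul_smul_comm, smul_comm c]

lemma opS_apply (s t : k) (z : A) (f : Mod N A) (a b : Fin N) :
    opS N s t z f a b = (s ^ b.1 * t ^ a.1) • (z * f a b) := rfl

lemma opS_mul (s t s' t' : k) (z z' : A) :
    opS N s t z * opS N s' t' z' = opS N (s * s') (t * t') (z * z') := by
  refine LinearMap.ext fun f => ?_
  funext a b
  simp only [Module.End.mul_apply, opS_apply, mul_smul_comm, smul_smul, mul_pow, mul_assoc]
  congr 1; ring

lemma opS_one : opS N (1 : k) 1 (1 : A) = 1 := by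
  refine LinearMap.ext fun f => ?_
  funext a b; simp [opS_apply]

lemma opS_pow (s t : k) (z : A) (m : ℕ) : opS N s t z ^ m = opS N (s ^ m) (t ^ m) (z ^ m) := by
  induction m with
  | zero => simp [opS_one]
  | succ m ih => rw [pow_succ, ih, opS_mul, pow_succ, pow_succ, pow_succ]

lemma opS_opF (s t : k) (z : A) (hst : s * t = 1) :
    opS N s t z * opF N = t • (opF N * opS N s t z) := by
  refine LinearMap.ext fun f => ?_
  funext a b
  simp only [Module.End.mul_apply, opS_apply, opF, LinearMap.coe_mk, AddHom.coe_mk,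
    LinearMap.smul_apply, Pi.smul_apply]
  split_ifs with h
  · rw [smul_smul]
    obtain ⟨a', ha⟩ : ∃ a', a.1 = a' + 1 := ⟨a.1 - 1, by omega⟩
    congr 1
    simp only [ha, Nat.add_sub_cancel]; ring
  · simp

lemma opS_opE (s t : k) (z : A) (hst : s * t = 1) (hzx : z * x = x * z) (hzy : z * y = y * z) :
    opS N s t z * opE N n q x y = s • (opE N n q x y * opS N s t z) := by
  have hc : ∀ a b, z * cc n q x y a b = cc n q x y a b * z := by
    intro a b
    have : Commute z (cc n q x y a b) := by
      unfold cc
      refine Commute.smul_right (Commute.sub_right (Commute.smul_right ?_ _)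
        (Commute.smul_right (Commute.one_right _) _)) _
      exact ((show Commute z x from hzx).pow_right _).mul_right hzy
    exact this
  refine LinearMap.ext fun f => ?_
  funext a b
  simp only [Module.End.mul_apply, opS_apply, opE, LinearMap.coe_mk, AddHom.coe_mk,
    LinearMap.smul_apply, Pi.smul_apply, smul_add, mul_add]
  congr 1
  · split_ifs with h
    · obtain ⟨b', hb⟩ : ∃ a', b.1 = a' + 1 := ⟨b.1 - 1, by omega⟩
      rw [mul_smul_comm, smul_smul, smul_smul, smul_smul]
      congr 1
      simp only [hb, Nat.add_sub_cancel]; ring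
    · simp
  · split_ifs with h
    · rw [mul_smul_comm, ← mul_assoc, hc, mul_assoc, smul_smul]
      congr 1
      linear_combination (- s ^ b.1 * t ^ a.1) * hst
    · simp

lemma op_rel (hq : q ≠ 0) (hgN : gauss k q N = 0) :
    opF N * opE N n q x y - q⁻¹ • (opE N n q x y * opF N) =
      1 - opS N (q⁻¹ ^ 2) (q ^ 2) (x ^ (n - 1) * y) := by
  refine LinearMap.ext fun f => ?_
  funext a b
  simp only [Module.End.mul_apply, opS_apply, opE, opF, LinearMap.coe_mk, AddHom.coe_mk,
    LinearMap.smul_apply, Pi.smul_apply, LinearMap.sub_apply, Pi.sub_apply, Module.End.one_apply]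
  have key : cc n q x y a.1 b.1 - q⁻¹ • cc n q x y (a.1 + 1) b.1 =
      1 - ((q⁻¹ ^ 2) ^ b.1 * (q ^ 2) ^ a.1) • (x ^ (n - 1) * y) := by
    unfold cc
    rw [smul_smul]
    match_scalars
    · rw [gauss_succ]
      field_simp
      ring
    · rw [gauss_succ']
      field_simp
      ring
  have key2 : ∀ w : A, cc n q x y a.1 b.1 * w - q⁻¹ • (cc n q x y (a.1 + 1) b.1 * w) =
      w - ((q⁻¹ ^ 2) ^ b.1 * (q ^ 2) ^ a.1) • (x ^ (n - 1) * y * w) := by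
    intro w
    rw [← smul_mul_assoc, ← sub_mul, key, sub_mul, one_mul, smul_mul_assoc]
  have h0 : cc n q x y 0 b.1 = 0 := by simp [cc, gauss]
  have hN : cc n q x y N b.1 = 0 := by simp [cc, hgN]
  rw [← key2]
  have hA : (if h : a.1 + 1 < N then cc n q x y (a.1 + 1) b.1 *
      (if 1 ≤ a.1 + 1 then f ⟨a.1 + 1 - 1, by omega⟩ b else 0) else 0)
      = cc n q x y (a.1 + 1) b.1 * f a b := by
    split_ifs with h1 h2
    · rfl
    · omega
    · have : a.1 + 1 = N := by omega
      rw [this, hN, zero_mul]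
  rw [hA]
  by_cases ha : 1 ≤ a.1
  · obtain ⟨a', ha'⟩ : ∃ a', a.1 = a' + 1 := ⟨a.1 - 1, by omega⟩
    have hlt : a.1 - 1 + 1 < N := by omega
    simp only [ha, if_true, hlt, dif_pos]
    have : (⟨a.1 - 1 + 1, hlt⟩ : Fin N) = a := Fin.ext (by simp; omega)
    rw [this, show a.1 - 1 + 1 = a.1 by omega]
    rw [smul_add, add_sub_add_comm]
    convert zero_add _ using 2
    split_ifs with hb
    · rw [smul_smul, sub_eq_zero]
      congr 1
      simp only [ha', Nat.add_sub_cancel, pow_succ]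
      field_simp
    · simp
  · have : a.1 = 0 := by omega
    simp [this, h0]

/-- support condition -/
def supp0 (l : ℕ) (f : Mod N A) : Prop := ∀ a b : Fin N, (a.1 ≠ 0 ∨ b.1 < l) → f a b = 0

lemma supp0_E (l : ℕ) (f : Mod N A) (h : supp0 N l f) : supp0 N (l + 1) (opE N n q x y f) := by
  intro a b hab
  simp only [opE, LinearMap.coe_mk, AddHom.coe_mk]
  rw [show (if h : a.1 + 1 < N then cc n q x y (a.1 + 1) b.1 * f ⟨a.1 + 1, h⟩ b else 0) = 0 by
    split_ifs with h1
    · rw [h _ _ (Or.inl (by simp)), mul_zero]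
    · rfl]
  split_ifs with hb
  · rw [h _ _ (by rcases hab with h | h; exact Or.inl h; right; simp; omega)]; simp
  · simp

lemma supp0_Epow (l : ℕ) (f : Mod N A) (h : supp0 N 0 f) :
    supp0 N l ((opE N n q x y ^ l) f) := by
  induction l with
  | zero => simpa
  | succ l ih => rw [pow_succ', Module.End.mul_apply]; exact supp0_E _ _ _ _ _ _ _ ih

lemma opE_pow_zero (hc : opF N * opE N n q x y ^ N = opE N n q x y ^ N * opF N) :
    opE N n q x y ^ N = 0 := by
  have key : ∀ d, ∀ f : Mod N A, (∀ a b : Fin N, d ≤ a.1 → f a b = 0) →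
      (opE N n q x y ^ N) f = 0 := by
    intro d
    induction d with
    | zero =>
      intro f hf
      have : f = 0 := by funext a b; exact hf a b (Nat.zero_le _)
      rw [this, map_zero]
    | succ d ih =>
      intro f hf
      let f0 : Mod N A := fun a b => if a.1 = 0 then f a b else 0
      let f1 : Mod N A := fun a b => if h : a.1 + 1 < N then f ⟨a.1 + 1, h⟩ b else 0
      have hdec : f = f0 + opF (k := k) N f1 := by
        funext a b
        simp only [Pi.add_apply, f0, f1, opF, LinearMap.coe_mk, AddHom.coe_mk]
        by_cases ha : a.1 = 0
        · simp [ha]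
        · have h1 : 1 ≤ a.1 := by omega
          have h2 : a.1 - 1 + 1 < N := by omega
          simp only [ha, h1, h2, if_true, if_false, dif_pos, zero_add]
          congr 1
          exact Fin.ext (by simp; omega)
      have h1 : (opE N n q x y ^ N) f1 = 0 := by
        apply ih
        intro a b hab
        simp only [f1]
        split_ifs with h
        · exact hf _ _ (by simp; omega)
        · rfl
      have h0 : (opE N n q x y ^ N) f0 = 0 := by
        have := supp0_Epow N n q x y N f0 (by
          intro a b hab
          have : a.1 ≠ 0 := by simpa using hab
          simp [f0, this])
        funext a b
        exact this a b (Or.inr b.2)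
      rw [hdec, map_add, h0, zero_add, ← Module.End.mul_apply, ← hc, Module.End.mul_apply, h1,
        map_zero]
  refine LinearMap.ext fun f => ?_
  funext a b
  rw [key N f (fun a b h => absurd a.2 (by omega))]; rfl

lemma opF_pow_apply (m : ℕ) (f : Mod N A) (a b : Fin N) : ((opF N ^ m : Module.End k (Mod N A)) f) a b =
    if m ≤ a.1 then f ⟨a.1 - m, by omega⟩ b else 0 := by
  induction m generalizing a with
  | zero => simp
  | succ m ih =>
    rw [pow_succ', Module.End.mul_apply]
    simp only [opF, LinearMap.coe_mk, AddHom.coe_mk]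
    simp only [opF] at ih
    split_ifs with h1 h2 h2
    · rw [ih, if_pos (by simp; omega)]
      congr 1; exact Fin.ext (by simp; omega)
    · rw [ih, if_neg (by simp; omega)]
    · omega
    · rfl

end rep

section Urel
variable {k : Type} [Field k] {n : ℕ} {q : k}

lemma mk_rel {a b : FreeAlgebra k (Fin 4)} (h : Rel k n q a b) :
    RingQuot.mkAlgHom k (Rel k n q) a = RingQuot.mkAlgHom k (Rel k n q) b :=
  RingQuot.mkAlgHom_rel k h

lemma K_pow : K k n q ^ n = 1 := by simpa [K] using mk_rel (Rel.Kord (k := k) (n := n) (q := q))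

lemma Kh_pow : Kh k n q ^ n = (K k n q ^ (n - 1)) ^ 2 := by
  simpa [K, Kh] using mk_rel (Rel.Khord (k := k) (n := n) (q := q))

lemma K_Kh : K k n q * Kh k n q = Kh k n q * K k n q := by
  simpa [K, Kh] using mk_rel (Rel.KKh (k := k) (n := n) (q := q))

lemma E_pow : E k n q ^ n ^ 2 = 0 := by
  simpa [E] using mk_rel (Rel.Enil (k := k) (n := n) (q := q))

lemma F_pow : F k n q ^ n ^ 2 = 0 := by
  simpa [F] using mk_rel (Rel.Fnil (k := k) (n := n) (q := q))

/-- `g = K⁻¹ K̂` -/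
def gg (k : Type) [Field k] (n : ℕ) (q : k) : U k n q := K k n q ^ (n - 1) * Kh k n q

lemma FE_rel : F k n q * E k n q - q⁻¹ • (E k n q * F k n q) = 1 - gg k n q := by
  simpa [K, Kh, E, F, gg] using mk_rel (Rel.EF (k := k) (n := n) (q := q))

lemma Kh_pow2 : Kh k n q ^ n ^ 2 = 1 := by
  rw [sq, pow_mul, Kh_pow, ← pow_mul, ← pow_mul,
    show (n - 1) * (2 * n) = n * ((n - 1) * 2) by ring, pow_mul, K_pow, one_pow]

lemma K_cancel (hn : 0 < n) : K k n q ^ (n - 1) * K k n q = 1 := by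
  rw [← pow_succ, Nat.sub_add_cancel hn, K_pow]

lemma Kh_cancel (hn : 0 < n) : Kh k n q ^ (n ^ 2 - 1) * Kh k n q = 1 := by
  rw [← pow_succ, Nat.sub_add_cancel (Nat.pow_pos hn), Kh_pow2]

lemma K_E (hn : 0 < n) : K k n q * E k n q = q ^ n • (E k n q * K k n q) := by
  have h : K k n q * E k n q * K k n q ^ (n - 1) = q ^ n • E k n q := by
    simpa [K, E] using mk_rel (Rel.KE (k := k) (n := n) (q := q))
  rw [← smul_mul_assoc, ← h, mul_assoc _ _ (K k n q), K_cancel hn, mul_one]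

lemma K_F (hn : 0 < n) : K k n q * F k n q = (q ^ n)⁻¹ • (F k n q * K k n q) := by
  have h : K k n q * F k n q * K k n q ^ (n - 1) = (q ^ n)⁻¹ • F k n q := by
    simpa [K, F] using mk_rel (Rel.KF (k := k) (n := n) (q := q))
  rw [← smul_mul_assoc, ← h, mul_assoc _ _ (K k n q), K_cancel hn, mul_one]

lemma Kh_E (hn : 0 < n) :
    Kh k n q * E k n q = (q ^ n * (q ^ 2)⁻¹) • (E k n q * Kh k n q) := by
  have h : Kh k n q * E k n q * Kh k n q ^ (n ^ 2 - 1) = (q ^ n * (q ^ 2)⁻¹) • E k n q := by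
    simpa [Kh, E] using mk_rel (Rel.KhE (k := k) (n := n) (q := q))
  rw [← smul_mul_assoc, ← h, mul_assoc _ _ (Kh k n q), Kh_cancel hn, mul_one]

lemma Kh_F (hn : 0 < n) :
    Kh k n q * F k n q = ((q ^ n)⁻¹ * q ^ 2) • (F k n q * Kh k n q) := by
  have h : Kh k n q * F k n q * Kh k n q ^ (n ^ 2 - 1) = ((q ^ n)⁻¹ * q ^ 2) • F k n q := by
    simpa [Kh, F] using mk_rel (Rel.KhF (k := k) (n := n) (q := q))
  rw [← smul_mul_assoc, ← h, mul_assoc _ _ (Kh k n q), Kh_cancel hn, mul_one]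

lemma qn_aux (hn : 0 < n) (hq : q ^ n ^ 2 = 1) : (q ^ n) ^ (n - 1) = (q ^ n)⁻¹ := by
  apply eq_inv_of_mul_eq_one_left
  rw [← pow_succ, Nat.sub_add_cancel hn, ← pow_mul, ← sq, hq]

lemma q_ne (hn : 0 < n) (hq : q ^ n ^ 2 = 1) : q ≠ 0 := by
  rintro rfl
  rw [zero_pow (by positivity)] at hq
  exact zero_ne_one hq

lemma gg_E (hn : 0 < n) (hq : q ^ n ^ 2 = 1) :
    gg k n q * E k n q = q⁻¹ ^ 2 • (E k n q * gg k n q) := by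
  have := q_ne hn hq
  rw [gg, mul_assoc, Kh_E hn, mul_smul_comm, ← mul_assoc, comm_pow_left _ (K k n q) _ (K_E hn),
    smul_mul_assoc, smul_smul, qn_aux hn hq, mul_assoc (_ : U k n q)]
  congr 1; field_simp

lemma gg_F (hn : 0 < n) (hq : q ^ n ^ 2 = 1) :
    gg k n q * F k n q = q ^ 2 • (F k n q * gg k n q) := by
  have := q_ne hn hq
  rw [gg, mul_assoc, Kh_F hn, mul_smul_comm, ← mul_assoc, comm_pow_left _ (K k n q) _ (K_F hn),
    smul_mul_assoc, smul_smul, inv_pow, qn_aux hn hq, mul_assoc (_ : U k n q)]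
  congr 1; field_simp

lemma gg_pow (h2 : 2 ∣ n) : gg k n q ^ (n ^ 2 / 2) = 1 := by
  obtain ⟨m, rfl⟩ := h2
  have hc : Commute (K k (2 * m) q ^ (2 * m - 1)) (Kh k (2 * m) q) :=
    (show Commute _ _ from K_Kh).pow_left _
  rw [gg, show (2 * m) ^ 2 / 2 = (2 * m) * m by
    rw [show (2 * m) ^ 2 = 2 * (2 * m * m) by ring]; simp, pow_mul, hc.mul_pow, Kh_pow,
    ← pow_mul, mul_comm _ (2 * m), pow_mul (K k _ q), K_pow, one_pow, one_mul, ← pow_mul, ← pow_mul,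
    show (2 * m - 1) * (2 * m) = 2 * m * (2 * m - 1) by ring, pow_mul, K_pow, one_pow]

end Urel

section URep
variable {k : Type} [Field k] {A : Type} [Ring A] [Algebra k A]
variable (n : ℕ) (q : k) (x y : A)

def repFun : Fin 4 → Module.End k (Mod (n ^ 2) A) :=
  ![opS (n ^ 2) (q ^ n) (q ^ n)⁻¹ x, opS (n ^ 2) (q ^ n * (q ^ 2)⁻¹) ((q ^ n)⁻¹ * q ^ 2) y,
    opE (n ^ 2) n q x y, opF (n ^ 2)]

set_option maxHeartbeats 1000000 in
lemma rep_exists (hn : 0 < n) (hn1 : 1 < n ^ 2) (hq : IsPrimitiveRoot q (n ^ 2))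
    (hxy : x * y = y * x) (hx : x ^ n = 1) (hy : y ^ n = (x ^ (n - 1)) ^ 2) :
    ∃ ρ : U k n q →ₐ[k] Module.End k (Mod (n ^ 2) A),
      ρ (K k n q) = opS (n ^ 2) (q ^ n) (q ^ n)⁻¹ x ∧
      ρ (Kh k n q) = opS (n ^ 2) (q ^ n * (q ^ 2)⁻¹) ((q ^ n)⁻¹ * q ^ 2) y ∧
      ρ (E k n q) = opE (n ^ 2) n q x y ∧ ρ (F k n q) = opF (n ^ 2) := by
  have hqN : q ^ n ^ 2 = 1 := hq.pow_eq_one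
  have hq0 : q ≠ 0 := q_ne hn hqN
  have hq1 : q ≠ 1 := hq.ne_one hn1
  have hqq : (q ^ n) ^ n = 1 := by rw [← pow_mul, ← sq, hqN]
  have hgN : gauss k q (n ^ 2) = 0 := gauss_zero_of hqN hq1
  have hgN' : gauss k q⁻¹ (n ^ 2) = 0 :=
    gauss_zero_of (by rw [inv_pow, hqN, inv_one]) (by simpa using hq1)
  have s1 : q ^ n * (q ^ n)⁻¹ = 1 := mul_inv_cancel₀ (pow_ne_zero _ hq0)
  have s2 : q ^ n * (q ^ 2)⁻¹ * ((q ^ n)⁻¹ * q ^ 2) = 1 := by field_simp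
  have hxcan : x * x ^ (n - 1) = 1 := by rw [← pow_succ', Nat.sub_add_cancel hn, hx]
  have hyN : y ^ n ^ 2 = 1 := by
    rw [sq, pow_mul, hy, ← pow_mul, ← pow_mul,
      show (n - 1) * (2 * n) = n * ((n - 1) * 2) by ring, pow_mul, hx, one_pow]
  have hycan : y * y ^ (n ^ 2 - 1) = 1 := by
    rw [← pow_succ', Nat.sub_add_cancel (Nat.pow_pos hn), hyN]
  have tK : opS (n ^ 2) (q ^ n) (q ^ n)⁻¹ x * opS (n ^ 2) (q ^ n) (q ^ n)⁻¹ x ^ (n - 1) = 1 := by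
    rw [← pow_succ', Nat.sub_add_cancel hn, opS_pow, hx, inv_pow, hqq, inv_one, opS_one]
  have s3 : (q ^ n * (q ^ 2)⁻¹) ^ n ^ 2 = 1 := by
    rw [mul_pow, inv_pow, ← pow_mul, ← pow_mul, mul_comm n, mul_comm 2, pow_mul, pow_mul, hqN]
    simp
  have s4 : ((q ^ n)⁻¹ * q ^ 2) ^ n ^ 2 = 1 := by
    rw [mul_pow, inv_pow, ← pow_mul, ← pow_mul, mul_comm n, mul_comm 2, pow_mul, pow_mul, hqN]
    simp
  have tKh : opS (n ^ 2) (q ^ n * (q ^ 2)⁻¹) ((q ^ n)⁻¹ * q ^ 2) y *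
      opS (n ^ 2) (q ^ n * (q ^ 2)⁻¹) ((q ^ n)⁻¹ * q ^ 2) y ^ (n ^ 2 - 1) = 1 := by
    rw [← pow_succ', Nat.sub_add_cancel (Nat.pow_pos hn), opS_pow, hyN, s3, s4, opS_one]
  have tg : opS (n ^ 2) (q ^ n) (q ^ n)⁻¹ x ^ (n - 1) *
      opS (n ^ 2) (q ^ n * (q ^ 2)⁻¹) ((q ^ n)⁻¹ * q ^ 2) y =
      opS (n ^ 2) (q⁻¹ ^ 2) (q ^ 2) (x ^ (n - 1) * y) := by
    rw [opS_pow, opS_mul, inv_pow, qn_aux hn hqN]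
    congr 1
    · field_simp
    · field_simp
  have cx : Commute x y := hxy
  have rEF := op_rel (n ^ 2) n q x y hq0 hgN
  have rE : opE (n ^ 2) n q x y ^ n ^ 2 = 0 := by
    apply opE_pow_zero
    refine FE_pow_N q⁻¹ _ _ _ rEF ?_ _ (Nat.pow_pos hn) (by rw [inv_pow, hqN, inv_one]) hgN'
    refine opS_opE _ _ _ _ _ _ _ _ (by field_simp) ?_ ?_
    · exact ((Commute.refl x).pow_left _).mul_left cx.symm
    · exact (cx.pow_left _).mul_left (Commute.refl y)
  have hrel : ∀ ⦃a b : FreeAlgebra k (Fin 4)⦄, Rel k n q a b →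
      FreeAlgebra.lift k (repFun n q x y) a = FreeAlgebra.lift k (repFun n q x y) b := by
    intro a b h
    cases h with
    | Kord => simp [repFun, opS_pow, hx, hqq, opS_one]
    | Khord =>
      simp only [map_pow, FreeAlgebra.lift_ι_apply, repFun, Matrix.cons_val, opS_pow, hy]
      congr 1
      · rw [mul_pow, hqq, qn_aux hn hqN, one_mul, inv_pow, inv_pow, ← pow_mul, ← pow_mul, mul_comm]
      · rw [mul_pow, inv_pow, hqq, inv_pow, qn_aux hn hqN, inv_one, one_mul, inv_inv, ← pow_mul,
          ← pow_mul, mul_comm]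
    | KKh =>
      simp only [map_mul, FreeAlgebra.lift_ι_apply, repFun, Matrix.cons_val, opS_mul, hxy]
      congr 1 <;> ring
    | KE =>
      simp only [map_mul, map_pow, map_smul, FreeAlgebra.lift_ι_apply, repFun, Matrix.cons_val]
      rw [opS_opE _ _ _ _ _ _ _ _ s1 rfl hxy, smul_mul_assoc, mul_assoc, tK, mul_one]
    | KF =>
      simp only [map_mul, map_pow, map_smul, FreeAlgebra.lift_ι_apply, repFun, Matrix.cons_val]
      rw [opS_opF _ _ _ _ s1, smul_mul_assoc, mul_assoc, tK, mul_one]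
    | KhE =>
      simp only [map_mul, map_pow, map_smul, FreeAlgebra.lift_ι_apply, repFun, Matrix.cons_val]
      rw [opS_opE _ _ _ _ _ _ _ _ s2 hxy.symm rfl, smul_mul_assoc, mul_assoc, tKh, mul_one]
    | KhF =>
      simp only [map_mul, map_pow, map_smul, FreeAlgebra.lift_ι_apply, repFun, Matrix.cons_val]
      rw [opS_opF _ _ _ _ s2, smul_mul_assoc, mul_assoc, tKh, mul_one]
    | Enil =>
      simp only [map_pow, map_zero, FreeAlgebra.lift_ι_apply, repFun, Matrix.cons_val]
      exact rE
    | Fnil =>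
      simp only [map_pow, map_zero, FreeAlgebra.lift_ι_apply, repFun, Matrix.cons_val]
      refine LinearMap.ext fun f => ?_
      funext a b
      rw [opF_pow_apply, if_neg (by omega)]; rfl
    | EF =>
      simp only [map_mul, map_pow, map_smul, map_sub, map_one, FreeAlgebra.lift_ι_apply, repFun,
        Matrix.cons_val]
      rw [rEF, tg]
  refine ⟨RingQuot.liftAlgHom k ⟨FreeAlgebra.lift k (repFun n q x y), hrel⟩, ?_, ?_, ?_, ?_⟩ <;>
    simp [K, Kh, E, F, repFun]

variable (N : ℕ)

/-- delta functions -/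
def dl (a0 b0 : ℕ) (z : A) : Mod N A := fun a b => if a.1 = a0 ∧ b.1 = b0 then z else 0

lemma opF_dl (m a0 b0 : ℕ) (z : A) :
    (opF N ^ m : Module.End k (Mod N A)) (dl N a0 b0 z) = dl N (a0 + m) b0 z := by
  funext a b
  rw [opF_pow_apply]
  simp only [dl]
  split_ifs <;> first | rfl | omega

lemma opS_dl (s t : k) (w : A) (a0 b0 : ℕ) (z : A) :
    opS N s t w (dl N a0 b0 z) = dl N a0 b0 ((s ^ b0 * t ^ a0) • (w * z)) := by
  funext a b
  simp only [opS_apply, dl]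
  split_ifs with h
  · rw [h.1, h.2]
  · simp

lemma opE_dl (m b0 : ℕ) (z : A) :
    (opE N n q x y ^ m) (dl N 0 b0 z) = dl N 0 (b0 + m) z := by
  induction m with
  | zero => simp
  | succ m ih =>
    rw [pow_succ', Module.End.mul_apply, ih]
    funext a b
    simp only [opE, dl, LinearMap.coe_mk, AddHom.coe_mk]
    by_cases ha : a.1 = 0
    · simp [ha]
      split_ifs <;> first | rfl | omega
    · simp [ha]

/-- On the top row. -/
lemma opE_top (m : ℕ) (hN : 0 < N) (z : A) (b : Fin N) :
    ((opE N n q x y ^ m) (dl N (N - 1) 0 z)) ⟨N - 1, by omega⟩ b =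
      if b.1 = m then (q ^ (N - 1)) ^ m • z else 0 := by
  induction m generalizing b with
  | zero => simp [dl]
  | succ m ih =>
    rw [pow_succ', Module.End.mul_apply]
    simp only [opE, LinearMap.coe_mk, AddHom.coe_mk]
    simp only [opE] at ih
    rw [dif_neg (by omega), add_zero, ih]
    split_ifs with h1 h2 h3 h3 h3
    · rw [smul_smul, pow_succ']
    · simp at h2; omega
    · simp at h2; omega
    · simp
    · omega
    · rfl

end URep

section main
variable {k : Type} [Field k] {n : ℕ} {q : k}

lemma mono_comm (hn : 0 < n) (c d b : ℕ) :
    K k n q ^ c * Kh k n q ^ d * E k n q ^ b =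
      (((q ^ n) ^ c) ^ b * ((q ^ n * (q ^ 2)⁻¹) ^ d) ^ b) •
        (E k n q ^ b * (K k n q ^ c * Kh k n q ^ d)) := by
  rw [mul_assoc, comm_pow_pow _ (Kh k n q) _ (Kh_E hn), mul_smul_comm, ← mul_assoc,
    comm_pow_pow _ (K k n q) _ (K_E hn), smul_mul_assoc, smul_smul, mul_assoc (E k n q ^ b),
    mul_comm (_ ^ b : k)]

def Psi (k : Type) [Field k] (n : ℕ) (q : k) : Mod (n ^ 2) (U k n q) →ₗ[k] U k n q where
  toFun f := ∑ a : Fin (n ^ 2), ∑ b : Fin (n ^ 2), F k n q ^ a.1 * E k n q ^ b.1 * f a b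
  map_add' f g := by simp [mul_add, Finset.sum_add_distrib]
  map_smul' c f := by simp [Finset.smul_sum]

lemma Psi_dl (a b : ℕ) (ha : a < n ^ 2) (hb : b < n ^ 2) (z : U k n q) :
    Psi k n q (dl (n ^ 2) a b z) = F k n q ^ a * E k n q ^ b * z := by
  simp only [Psi, LinearMap.coe_mk, AddHom.coe_mk, dl]
  rw [Finset.sum_eq_single ⟨a, ha⟩, Finset.sum_eq_single ⟨b, hb⟩]
  · simp
  · intro b' _ h
    rw [if_neg, mul_zero]
    rintro ⟨_, h2⟩
    exact h (Fin.ext h2)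
  · simp
  · intro a' _ h
    apply Finset.sum_eq_zero
    intro b' _
    rw [if_neg, mul_zero]
    rintro ⟨h2, _⟩
    exact h (Fin.ext h2)
  · simp

lemma F_inj (hn : 0 < n) (hn1 : 1 < n ^ 2) (hq : IsPrimitiveRoot q (n ^ 2)) (z : U k n q)
    (hz : z ∈ pbw k n q) (hF : F k n q * z = 0) : z = 0 := by
  obtain ⟨ρ, hK, hKh, hE, hFF⟩ := rep_exists n q (K k n q) (Kh k n q) hn hn1 hq K_Kh K_pow Kh_pow
  let Φ : U k n q →ₗ[k] Mod (n ^ 2) (U k n q) :=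
    (LinearMap.applyₗ (dl (n ^ 2) 0 0 (1 : U k n q))).comp ρ.toLinearMap
  have hΦ : ∀ w, Φ w = ρ w (dl (n ^ 2) 0 0 (1 : U k n q)) := fun w => rfl
  have hgen : ∀ a b c d : ℕ, Φ (F k n q ^ a * K k n q ^ c * Kh k n q ^ d * E k n q ^ b) =
      dl (n ^ 2) a b ((((q ^ n) ^ c) ^ b * ((q ^ n * (q ^ 2)⁻¹) ^ d) ^ b) •
        (K k n q ^ c * Kh k n q ^ d)) := by
    intro a b c d
    rw [hΦ]
    simp only [map_mul, map_pow, hK, hKh, hE, hFF, Module.End.mul_apply]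
    rw [opE_dl, opS_pow, opS_pow, opS_dl, opS_dl, opF_dl]
    simp [smul_smul]
  have h1 : ∀ z ∈ pbw k n q, Psi k n q (Φ z) = z := by
    intro z hz
    unfold pbw at hz
    induction hz using Submodule.span_induction with
    | mem w hw =>
      obtain ⟨a, b, c, d, ha, hb, hc, hd, rfl⟩ := hw
      rw [hgen, Psi_dl _ _ (by omega) (by omega), mul_smul_comm, mul_assoc, ← mul_smul_comm,
        ← mono_comm hn]
      simp only [mul_assoc]
    | zero => simp
    | add u v _ _ hu hv => rw [map_add, map_add, hu, hv]
    | smul c u _ hu => rw [map_smul, map_smul, hu]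
  have h2 : ∀ z ∈ pbw k n q, ∀ a b : Fin (n ^ 2), ¬ (a.1 + 1 < n ^ 2) → Φ z a b = 0 := by
    intro z hz a' b' hab
    unfold pbw at hz
    induction hz using Submodule.span_induction with
    | mem w hw =>
      obtain ⟨a, b, c, d, ha, hb, hc, hd, rfl⟩ := hw
      rw [hgen]
      simp only [dl]
      rw [if_neg (by omega)]
    | zero => simp
    | add u v _ _ hu hv => rw [map_add, Pi.add_apply, Pi.add_apply, hu, hv, add_zero]
    | smul c u _ hu => rw [map_smul, Pi.smul_apply, Pi.smul_apply, hu, smul_zero]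
  have h3 : Φ (F k n q * z) = opF (k := k) (n ^ 2) (Φ z) := by
    rw [hΦ, map_mul, Module.End.mul_apply, hFF]; rfl
  rw [hF, map_zero] at h3
  have h4 : Φ z = 0 := by
    funext a b
    by_cases ha : a.1 + 1 < n ^ 2
    · have := congrFun (congrFun h3 ⟨a.1 + 1, ha⟩) b
      simp only [opF, LinearMap.coe_mk, AddHom.coe_mk] at this
      rw [if_pos (by omega)] at this
      exact this.symm
    · exact h2 z hz a b ha
  rw [← h1 z hz, h4, map_zero]

/-- spans of monomials with `F`-exponent at least `s` -/
def W (k : Type) [Field k] (n : ℕ) (q : k) (s : ℕ) : Submodule k (U k n q) :=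
  Submodule.span k {x | ∃ a b c d : ℕ, s ≤ a ∧
    x = F k n q ^ a * (K k n q ^ c * Kh k n q ^ d) * E k n q ^ b}

lemma W_mem (s a b c d : ℕ) (h : s ≤ a) :
    F k n q ^ a * (K k n q ^ c * Kh k n q ^ d) * E k n q ^ b ∈ W k n q s :=
  Submodule.subset_span ⟨a, b, c, d, h, rfl⟩

lemma pbw_mem (hn : 0 < n) (a b c d : ℕ) (h : a ≤ n ^ 2 - 2) :
    F k n q ^ a * (K k n q ^ c * Kh k n q ^ d) * E k n q ^ b ∈ pbw k n q := by
  have hN : 0 < n ^ 2 := Nat.pow_pos hn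
  by_cases hb : b ≤ n ^ 2 - 1
  · refine Submodule.subset_span ⟨a, b, c % n, d % n ^ 2, h, hb, ?_, ?_, ?_⟩
    · have := Nat.mod_lt c hn; omega
    · have := Nat.mod_lt d hN; omega
    · rw [pow_eq_pow_mod c K_pow, pow_eq_pow_mod d Kh_pow2, mul_assoc (F k n q ^ a) (_ ^ _) (_ ^ _)]
  · obtain ⟨b', rfl⟩ : ∃ b', b = n ^ 2 + b' := ⟨b - n ^ 2, by omega⟩
    rw [pow_add, E_pow, zero_mul, mul_zero]; exact zero_mem _

lemma gg_mono (c d : ℕ) : gg k n q * (K k n q ^ c * Kh k n q ^ d) =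
    K k n q ^ (n - 1 + c) * Kh k n q ^ (1 + d) := by
  have hc : Kh k n q * K k n q ^ c = K k n q ^ c * Kh k n q :=
    ((show Commute _ _ from K_Kh).pow_left c).symm
  rw [gg, pow_add, pow_add, pow_one, mul_assoc, ← mul_assoc (Kh k n q), hc]
  simp only [mul_assoc]

lemma E_W (hn : 0 < n) (hq : q ^ n ^ 2 = 1) (s : ℕ) (z : U k n q) (hz : z ∈ W k n q (s + 1)) :
    E k n q * z ∈ W k n q s := by
  have hq0 := q_ne hn hq
  unfold W at hz
  induction hz using Submodule.span_induction with
  | mem w hw =>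
    obtain ⟨a, b, c, d, ha, rfl⟩ := hw
    obtain ⟨a, rfl⟩ : ∃ a', a = a' + 1 := ⟨a - 1, by omega⟩
    obtain ⟨c1, c2, h⟩ := EF_pow q (q ^ 2) hq0 _ _ _ (FE_rel (k := k) (n := n) (q := q))
      (gg_F hn hq) a
    have hm := mono_comm (k := k) (q := q) hn c d 1
    set s0 : k := ((q ^ n) ^ c) ^ 1 * ((q ^ n * (q ^ 2)⁻¹) ^ d) ^ 1 with hs0
    have hs : s0 ≠ 0 := by
      rw [hs0]
      refine mul_ne_zero ?_ ?_ <;> refine pow_ne_zero _ (pow_ne_zero _ ?_)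
      · exact pow_ne_zero _ hq0
      · exact mul_ne_zero (pow_ne_zero _ hq0) (inv_ne_zero (pow_ne_zero _ hq0))
    have hm' : E k n q * (K k n q ^ c * Kh k n q ^ d) =
        s0⁻¹ • (K k n q ^ c * Kh k n q ^ d * E k n q) := by
      rw [pow_one] at hm
      rw [hm, smul_smul, inv_mul_cancel₀ hs, one_smul]
    have e : E k n q * (F k n q ^ (a + 1) * (K k n q ^ c * Kh k n q ^ d) * E k n q ^ b) =
        (q ^ (a + 1) * s0⁻¹) •
          (F k n q ^ (a + 1) * (K k n q ^ c * Kh k n q ^ d) * E k n q ^ (b + 1)) +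
        c1 • (F k n q ^ a * (K k n q ^ c * Kh k n q ^ d) * E k n q ^ b) +
        c2 • (F k n q ^ a * (K k n q ^ (n - 1 + c) * Kh k n q ^ (1 + d)) * E k n q ^ b) := by
      rw [← gg_mono, ← mul_assoc, ← mul_assoc, h, add_mul, add_mul, smul_mul_assoc,
        mul_assoc _ (E k n q), hm', add_assoc]
      congr 1
      · rw [mul_smul_comm, smul_smul, smul_mul_assoc, pow_succ' _ b]
        simp only [mul_assoc]
      · simp only [mul_add, add_mul, mul_smul_comm, smul_mul_assoc, mul_one, mul_assoc]
    rw [e]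
    refine add_mem (add_mem ?_ ?_) ?_ <;> refine Submodule.smul_mem _ _ (W_mem _ _ _ _ _ ?_) <;>
      omega
  | zero => simp
  | add u v _ _ hu hv => rw [mul_add]; exact add_mem hu hv
  | smul c u _ hu => rw [mul_smul_comm]; exact Submodule.smul_mem _ _ hu

lemma Epow_W (hn : 0 < n) (hq : q ^ n ^ 2 = 1) (m s : ℕ) (z : U k n q)
    (hz : z ∈ W k n q (s + m)) : E k n q ^ m * z ∈ W k n q s := by
  induction m generalizing s with
  | zero => simpa using hz
  | succ m ih =>
    rw [pow_succ', mul_assoc]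
    exact E_W hn hq _ _ (ih (s + 1) (by convert hz using 2; ring))

lemma W_one (hn : 0 < n) (z : U k n q) (hz : z ∈ W k n q 1) :
    ∃ w ∈ pbw k n q, F k n q * w = z := by
  unfold W at hz
  induction hz using Submodule.span_induction with
  | mem w hw =>
    obtain ⟨a, b, c, d, ha, rfl⟩ := hw
    by_cases h : a - 1 ≤ n ^ 2 - 2
    · refine ⟨_, pbw_mem hn (a - 1) b c d h, ?_⟩
      rw [← mul_assoc, ← mul_assoc, ← pow_succ', Nat.sub_add_cancel ha]
    · refine ⟨0, zero_mem _, ?_⟩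
      obtain ⟨a', rfl⟩ : ∃ a', a = n ^ 2 + a' := ⟨a - n ^ 2, by omega⟩
      rw [pow_add, F_pow]; simp
  | zero => exact ⟨0, zero_mem _, mul_zero _⟩
  | add u v _ _ hu hv =>
    obtain ⟨u', h1, rfl⟩ := hu
    obtain ⟨v', h2, rfl⟩ := hv
    exact ⟨u' + v', add_mem h1 h2, mul_add _ _ _⟩
  | smul c u _ hu =>
    obtain ⟨u', h1, rfl⟩ := hu
    exact ⟨c • u', Submodule.smul_mem _ _ h1, mul_smul_comm _ _ _⟩

lemma gg_pow_mono (t c d : ℕ) : ∃ c' d', gg k n q ^ t * (K k n q ^ c * Kh k n q ^ d) =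
    K k n q ^ c' * Kh k n q ^ d' := by
  induction t with
  | zero => exact ⟨c, d, by simp⟩
  | succ t ih =>
    obtain ⟨c', d', h⟩ := ih
    exact ⟨_, _, by rw [pow_succ', mul_assoc, h, gg_mono]⟩

lemma alpha_W (i j : ℕ) : alpha k n q i j ∈ W k n q (n ^ 2 - 1) := by
  have base : ∀ t c d, F k n q ^ (n ^ 2 - 1) * (gg k n q ^ t * (K k n q ^ c * Kh k n q ^ d)) ∈
      W k n q (n ^ 2 - 1) := by
    intro t c d
    obtain ⟨c', d', h⟩ := gg_pow_mono (k := k) (n := n) (q := q) t c d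
    rw [h]
    simpa using W_mem (k := k) (n := n) (q := q) (n ^ 2 - 1) (n ^ 2 - 1) 0 c' d' le_rfl
  have hphi : ∀ c d, F k n q ^ (n ^ 2 - 1) * (phi k n q i * (K k n q ^ c * Kh k n q ^ d)) ∈
      W k n q (n ^ 2 - 1) := by
    intro c d
    rw [phi, smul_mul_assoc, mul_smul_comm, Finset.sum_mul, Finset.mul_sum]
    refine Submodule.smul_mem _ _ (Submodule.sum_mem _ fun t _ => ?_)
    rw [smul_mul_assoc, mul_smul_comm]
    exact Submodule.smul_mem _ _ (base t c d)
  have h0 := hphi 0 0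
  have h1 := hphi 1 (n / 2)
  simp only [pow_zero, mul_one, pow_one] at h0 h1
  rw [alpha, eIdem, oneJ]
  split_ifs
  · rw [mul_smul_comm, mul_smul_comm, mul_add, mul_add, mul_one]
    exact Submodule.smul_mem _ _ (add_mem h0 h1)
  · rw [mul_smul_comm, mul_smul_comm, mul_sub, mul_sub, mul_one]
    exact Submodule.smul_mem _ _ (sub_mem h0 h1)

lemma gg_pbw (hn : 0 < n) (hq : q ^ n ^ 2 = 1) (z : U k n q) (hz : z ∈ pbw k n q) :
    gg k n q * z ∈ pbw k n q := by
  unfold pbw at hz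
  induction hz using Submodule.span_induction with
  | mem w hw =>
    obtain ⟨a, b, c, d, ha, hb, hc, hd, rfl⟩ := hw
    have e : gg k n q * (F k n q ^ a * K k n q ^ c * Kh k n q ^ d * E k n q ^ b) =
        (q ^ 2) ^ a • (F k n q ^ a * (K k n q ^ (n - 1 + c) * Kh k n q ^ (1 + d)) *
          E k n q ^ b) := by
      rw [← gg_mono]
      simp only [← mul_assoc]
      rw [comm_pow_right _ (gg k n q) _ (gg_F hn hq)]
      simp only [smul_mul_assoc]
    rw [e]
    exact Submodule.smul_mem _ _ (pbw_mem hn _ _ _ _ ha)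
  | zero => simp
  | add u v _ _ hu hv => rw [mul_add]; exact add_mem hu hv
  | smul c u _ hu => rw [mul_smul_comm]; exact Submodule.smul_mem _ _ hu

lemma gam_spec (hn : 0 < n) (hn1 : 1 < n ^ 2) (hq : IsPrimitiveRoot q (n ^ 2)) (i j : ℕ)
    (hi : 2 * i ≤ n ^ 2) :
    gam k n q i j ∈ pbw k n q ∧ F k n q * gam k n q i j = beta k n q i j := by
  have hex : ∃! x, x ∈ pbw k n q ∧ F k n q * x = beta k n q i j := by
    obtain ⟨w, hw, hFw⟩ := W_one hn (beta k n q i j) (by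
      apply Epow_W hn hq.pow_eq_one
      have := alpha_W (k := k) (n := n) (q := q) i j
      refine Submodule.span_mono ?_ this
      rintro x ⟨a, b, c, d, h, rfl⟩
      exact ⟨a, b, c, d, by omega, rfl⟩)
    refine ⟨w, ⟨hw, hFw⟩, ?_⟩
    rintro w' ⟨hw', hFw'⟩
    refine sub_eq_zero.mp (F_inj hn hn1 hq _ (sub_mem hw' hw) ?_)
    rw [mul_sub, hFw, hFw', sub_self]
  rw [gam, dif_pos hex]
  exact hex.choose_spec.1

lemma gg_phi (h2 : 2 ∣ n) (hq0 : q ≠ 0) (hq : q ^ n ^ 2 = 1) (i : ℕ) :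
    gg k n q * phi k n q i = q ^ (2 * i) • phi k n q i := by
  have hev : 2 * (n ^ 2 / 2) = n ^ 2 := Nat.mul_div_cancel' (dvd_pow h2 two_ne_zero)
  let f : ℕ → U k n q := fun t => q⁻¹ ^ (2 * i * t) • gg k n q ^ t
  have hphi : phi k n q i = ((n ^ 2 : k)⁻¹ * 2) • ∑ t ∈ Finset.range (n ^ 2 / 2), f t := rfl
  have hf : ∀ t, gg k n q * f t = q ^ (2 * i) • f (t + 1) := by
    intro t
    simp only [f]
    rw [mul_smul_comm, ← pow_succ', smul_smul]
    congr 1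
    have e : q ^ (2 * i) * q⁻¹ ^ (2 * i) = 1 := by rw [← mul_pow, mul_inv_cancel₀ hq0, one_pow]
    rw [mul_add, mul_one, pow_add]
    linear_combination (-q⁻¹ ^ (2 * i * t)) * e
  have hend : f (n ^ 2 / 2) = f 0 := by
    simp only [f]
    rw [gg_pow h2, show 2 * i * (n ^ 2 / 2) = n ^ 2 * i by rw [← hev]; ring_nf; rw [← hev]; ring_nf; simp,
      pow_mul, inv_pow, hq]
    simp
  rw [hphi, mul_smul_comm, Finset.mul_sum, smul_comm]
  congr 1
  rw [Finset.sum_congr rfl (fun t _ => hf t), ← Finset.smul_sum]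
  congr 1
  have h1 := Finset.sum_range_succ f (n ^ 2 / 2)
  have h3 := Finset.sum_range_succ' f (n ^ 2 / 2)
  rw [h1, hend] at h3
  exact (add_right_cancel h3).symm

lemma gg_alpha (hn : 0 < n) (h2 : 2 ∣ n) (hq : q ^ n ^ 2 = 1) (i j : ℕ) :
    gg k n q * alpha k n q i j = ((q ^ 2) ^ (n ^ 2 - 1) * q ^ (2 * i)) • alpha k n q i j := by
  rw [alpha, eIdem, ← mul_assoc, comm_pow_right _ (gg k n q) _ (gg_F hn hq), smul_mul_assoc,
    mul_assoc, ← mul_assoc (gg k n q), gg_phi h2 (q_ne hn hq) hq, smul_mul_assoc, mul_smul_comm,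
    smul_smul]

lemma gg_gam (hn : 0 < n) (h2 : 2 ∣ n) (hn1 : 1 < n ^ 2) (hq : IsPrimitiveRoot q (n ^ 2)) (i j : ℕ)
    (h1 : 1 ≤ i) (hi : 2 * i ≤ n ^ 2) :
    gg k n q * gam k n q i j = q⁻¹ ^ (2 * i) • gam k n q i j := by
  have hqN := hq.pow_eq_one
  have hq0 := q_ne hn hqN
  obtain ⟨hm, hF⟩ := gam_spec hn hn1 hq i j hi
  refine sub_eq_zero.mp (F_inj hn hn1 hq _
    (sub_mem (gg_pbw hn hqN _ hm) (Submodule.smul_mem _ _ hm)) ?_)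
  have hFg : F k n q * gg k n q = q⁻¹ ^ 2 • (gg k n q * F k n q) := by
    rw [gg_F hn hqN, smul_smul, inv_pow, inv_mul_cancel₀ (pow_ne_zero _ hq0), one_smul]
  rw [mul_sub, mul_smul_comm, hF, ← mul_assoc, hFg, smul_mul_assoc, mul_assoc, hF, beta,
    ← mul_assoc, comm_pow_right _ (gg k n q) _ (gg_E hn hqN), smul_mul_assoc, mul_assoc,
    gg_alpha hn h2 hqN, mul_smul_comm, smul_smul, smul_smul, sub_eq_zero]
  congr 1
  obtain ⟨i, rfl⟩ : ∃ i', i = i' + 1 := ⟨i - 1, by omega⟩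
  have e1 : (q ^ 2) ^ (n ^ 2 - 1) = q⁻¹ ^ 2 := by
    rw [inv_pow]
    apply eq_inv_of_mul_eq_one_left
    rw [← pow_succ, Nat.sub_add_cancel (by omega), ← pow_mul, mul_comm, pow_mul, hqN, one_pow]
  rw [e1, show 2 * (i + 1) - 2 = 2 * i by omega]
  have e2 : q⁻¹ ^ (2 * (i + 1)) * q ^ (2 * (i + 1)) = 1 := by
    rw [← mul_pow, inv_mul_cancel₀ hq0, one_pow]
  calc _ = q⁻¹ ^ (2 * (i + 1)) * (q⁻¹ ^ (2 * (i + 1)) * q ^ (2 * (i + 1))) := by ring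
    _ = _ := by rw [e2, mul_one]

lemma char_exists (hn : 0 < n) (h4 : 4 ∣ n) (hq : IsPrimitiveRoot q (n ^ 2)) (i j : ℕ) :
    ∃ x : k, ∃ y : k, x ^ n = 1 ∧ y ^ n = (x ^ (n - 1)) ^ 2 ∧ x ^ (n - 1) * y = q ^ (2 * i) ∧
      x * y ^ (n / 2) = (-1) ^ j := by
  have hqN := hq.pow_eq_one
  have hq0 := q_ne hn hqN
  obtain ⟨m, rfl⟩ := h4
  obtain ⟨m, rfl⟩ : ∃ m', m = m' + 1 := ⟨m - 1, by omega⟩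
  let r := (1 + 2 * (m + 1)) * (2 * (m + 1) * j + (4 * m + 3) * i)
  have hx : (q ^ (4 * (m + 1) * r)) ^ (4 * (m + 1)) = 1 := by
    rw [← pow_mul, show 4 * (m + 1) * r * (4 * (m + 1)) = (4 * (m + 1)) ^ 2 * r by ring, pow_mul,
      hqN, one_pow]
  have hhalf : q ^ (8 * (m + 1) ^ 2) = -1 := by
    have h1 : q ^ (8 * (m + 1) ^ 2) * q ^ (8 * (m + 1) ^ 2) = 1 := by
      rw [← pow_add, ← hqN]; congr 1; ring
    have h2 : q ^ (8 * (m + 1) ^ 2) ≠ 1 :=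
      hq.pow_ne_one_of_pos_of_lt (by positivity) (by nlinarith)
    exact (mul_self_eq_one_iff.mp h1).resolve_left h2
  set x := q ^ (4 * (m + 1) * r) with hxdef
  have hx0 : x ≠ 0 := pow_ne_zero _ hq0
  have hxc : x ^ (4 * (m + 1) - 1) * x = 1 := by
    rw [← pow_succ, Nat.sub_add_cancel hn, hx]
  refine ⟨x, q ^ (2 * i) * x, hx, ?_, ?_, ?_⟩
  · have hA : (q ^ (2 * i) * x) ^ (4 * (m + 1)) * x ^ 2 = 1 := by
      rw [mul_pow, hx, mul_one, hxdef, ← pow_mul, ← pow_mul, ← pow_add]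
      rw [show 2 * i * (4 * (m + 1)) + 4 * (m + 1) * r * 2 = (4 * (m + 1)) ^ 2 *
        (j * (1 + 2 * (m + 1)) + i * (1 + 4 * (m + 1))) by simp only [r]; ring, pow_mul, hqN,
        one_pow]
    have hB : (x ^ (4 * (m + 1) - 1)) ^ 2 * x ^ 2 = 1 := by rw [← mul_pow, hxc, one_pow]
    exact mul_right_cancel₀ (pow_ne_zero 2 hx0) (hA.trans hB.symm)
  · rw [mul_left_comm, hxc, mul_one]
  · rw [show 4 * (m + 1) / 2 = 2 * (m + 1) by omega, mul_pow, hxdef, ← pow_mul, ← pow_mul,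
      ← pow_add, ← pow_add, ← hhalf, ← pow_mul]
    rw [show 4 * (m + 1) * r + (2 * i * (2 * (m + 1)) + 4 * (m + 1) * r * (2 * (m + 1))) =
      8 * (m + 1) ^ 2 * j + (4 * (m + 1)) ^ 2 *
        ((1 + (m + 1)) * (2 * (m + 1)) * j + i * (1 + (1 + (m + 1)) * (4 * m + 3))) by
        simp only [r]; ring, pow_add, pow_mul q ((4 * (m + 1)) ^ 2), hqN, one_pow, mul_one]

lemma functional_exists [CharZero k] (hn : 0 < n) (h4 : 4 ∣ n) (hn1 : 1 < n ^ 2)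
    (hq : IsPrimitiveRoot q (n ^ 2)) (i j : ℕ) (hj : j ≤ 1) :
    ∃ ψ : U k n q →ₗ[k] k, (∀ l, l < n ^ 2 - 1 → ψ (E k n q ^ l * alpha k n q i j) = 0) ∧
      ψ (E k n q ^ (n ^ 2 - 1) * alpha k n q i j) ≠ 0 := by
  have hqN := hq.pow_eq_one
  have hq0 := q_ne hn hqN
  obtain ⟨x, y, hx, hy, hg, hh⟩ := char_exists hn h4 hq i j
  obtain ⟨ρ, hK, hKh, hE, hFF⟩ := rep_exists n q x y hn hn1 hq (mul_comm x y) hx hy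
  set v : Mod (n ^ 2) k := dl (n ^ 2) 0 0 1 with hv
  have hdl : ∀ c : k, dl (n ^ 2) 0 0 c = c • v := by
    intro c; funext a b; simp [hv, dl]
  have hgv : ρ (gg k n q) v = q ^ (2 * i) • v := by
    rw [gg, map_mul, map_pow, hK, hKh, opS_pow, opS_mul, hv, opS_dl, hdl]
    simp [hg]
    rw [hv]
  have hgt : ∀ t, ρ (gg k n q ^ t) v = q ^ (2 * i * t) • v := by
    intro t
    induction t with
    | zero => simp
    | succ t ih =>
      rw [pow_succ' (gg k n q) t, map_mul, Module.End.mul_apply, ih, map_smul, hgv, smul_smul,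
        ← pow_add, Nat.mul_succ]
  have hphi : ρ (phi k n q i) v = v := by
    have e : phi k n q i = ((n ^ 2 : k)⁻¹ * 2) • ∑ t ∈ Finset.range (n ^ 2 / 2),
      (q⁻¹ ^ (2 * i * t)) • gg k n q ^ t := rfl
    rw [e, map_smul, map_sum, LinearMap.smul_apply, LinearMap.sum_apply]
    rw [Finset.sum_congr rfl (g := fun _ => v)]
    · obtain ⟨m, rfl⟩ := h4
      have hm : (m : k) ≠ 0 := by
        have : m ≠ 0 := by rintro rfl; simp at hn
        exact_mod_cast this
      rw [Finset.sum_const, Finset.card_range, show (4 * m) ^ 2 / 2 = 8 * m ^ 2 by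
        rw [show (4 * m) ^ 2 = 2 * (8 * m ^ 2) by ring]; simp, ← Nat.cast_smul_eq_nsmul k, smul_smul]
      convert one_smul k v using 2
      push_cast
      field_simp
      norm_num
    · intro t _
      rw [map_smul, LinearMap.smul_apply, hgt, smul_smul, ← mul_pow, inv_mul_cancel₀ hq0, one_pow,
        one_smul]
  have hhv : ρ (K k n q * Kh k n q ^ (n / 2)) v = (-1 : k) ^ j • v := by
    rw [map_mul, map_pow, hK, hKh, opS_pow, opS_mul, hv, opS_dl, hdl]
    simp [hh]
    exact hv
  have hone : ρ (oneJ k n q j) v = v := by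
    rw [oneJ]
    split_ifs with h
    · rw [map_smul, map_add, map_one, LinearMap.smul_apply, LinearMap.add_apply, hhv, h,
        Module.End.one_apply]
      module
    · have : j = 1 := by omega
      rw [map_smul, map_sub, map_one, LinearMap.smul_apply, LinearMap.sub_apply, hhv, this,
        Module.End.one_apply]
      module
  have hal : ρ (alpha k n q i j) v = dl (n ^ 2) (n ^ 2 - 1) 0 (1 : k) := by
    rw [alpha, eIdem, map_mul, map_mul, Module.End.mul_apply, Module.End.mul_apply, hone, hphi,
      map_pow, hFF, hv, opF_dl, zero_add]
  let top : Fin (n ^ 2) := ⟨n ^ 2 - 1, by omega⟩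
  let ψ : U k n q →ₗ[k] k :=
    (LinearMap.proj top).comp ((LinearMap.proj top).comp
      ((LinearMap.applyₗ v).comp ρ.toLinearMap))
  have hψ : ∀ l, ψ (E k n q ^ l * alpha k n q i j) =
      if n ^ 2 - 1 = l then (q ^ (n ^ 2 - 1)) ^ l • (1 : k) else 0 := by
    intro l
    have : ψ (E k n q ^ l * alpha k n q i j) = ρ (E k n q ^ l * alpha k n q i j) v top top := rfl
    rw [this, map_mul, Module.End.mul_apply, hal, map_pow, hE]
    exact opE_top n q x y (n ^ 2) l (by omega) 1 top
  refine ⟨ψ, fun l hl => ?_, ?_⟩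
  · rw [hψ, if_neg (by omega)]
  · rw [hψ, if_pos rfl]
    simp [hq0]

end main

section final
variable {k : Type} [Field k] {B : Type} [Ring B] [Algebra k B]

lemma final_abs (q : k) (N i : ℕ) (hN1 : 1 < N) (hq : IsPrimitiveRoot q N) (h1 : 1 ≤ i)
    (hi : 2 * i ≤ N) (E F g α γ : B) (ψ : B →ₗ[k] k) (ca : k)
    (hEN : E ^ N = 0) (hrel : F * E - q⁻¹ • (E * F) = 1 - g)
    (hgE : g * E = q⁻¹ ^ 2 • (E * g)) (hFa : F * α = 0) (hga : g * α = ca • α)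
    (hgc : g * γ = q⁻¹ ^ (2 * i) • γ) (hFc : F * γ = E ^ (2 * i - 2) * α)
    (hψ0 : ∀ l, l < N - 1 → ψ (E ^ l * α) = 0) (hψ1 : ψ (E ^ (N - 1) * α) ≠ 0) :
    LinearIndependent k (fun p : Fin N ⊕ Fin N =>
      Sum.elim (fun l : Fin N => E ^ (l : ℕ) * α) (fun l : Fin N => E ^ (l : ℕ) * γ) p) := by
  have hp : IsPrimitiveRoot q⁻¹ N := hq.inv
  have hp0 : q⁻¹ ≠ 0 := inv_ne_zero (hq.ne_zero (by omega))
  have hEz : ∀ l, N ≤ l → E ^ l = 0 := fun l hl => pow_eq_zero_of_le hl hEN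
  -- action of F on the `α`-string
  have hFEa : ∀ r, ∃ c : k, F * (E ^ (r + 1) * α) = c • (E ^ r * α) := by
    intro r
    refine ⟨gauss k q⁻¹ (r + 1) * (1 - q⁻¹ ^ r * ca), ?_⟩
    rw [← mul_assoc, FE_pow q⁻¹ E F g hrel hgE, add_mul, smul_mul_assoc, smul_mul_assoc,
      mul_assoc _ F, hFa, sub_mul, smul_mul_assoc, mul_assoc _ g, hga]
    simp only [mul_zero, smul_zero, zero_add, mul_smul_comm]
    module
  have hFta : ∀ t l, ψ (F ^ (t + 1) * (E ^ l * α)) = 0 := by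
    intro t
    have key : ∀ t l, ∃ c : k, ∃ l', F ^ (t + 1) * (E ^ l * α) = c • (E ^ l' * α) ∧
        (l' + 1 < N ∨ c = 0) := by
      intro t
      induction t with
      | zero =>
        intro l
        cases l with
        | zero => exact ⟨0, 0, by simp [hFa], Or.inr rfl⟩
        | succ l =>
          by_cases hl : l + 1 < N
          · obtain ⟨c, hc⟩ := hFEa l
            exact ⟨c, l, by rw [zero_add, pow_one, hc], Or.inl hl⟩
          · exact ⟨0, 0, by rw [hEz _ (by omega)]; simp, Or.inr rfl⟩
      | succ t ih =>
        intro l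
        obtain ⟨c, l', h, h'⟩ := ih l
        rw [pow_succ', mul_assoc, h, mul_smul_comm]
        cases l' with
        | zero => exact ⟨0, 0, by simp [hFa], Or.inr rfl⟩
        | succ l' =>
          obtain ⟨c', hc'⟩ := hFEa l'
          refine ⟨c * c', l', by rw [hc', smul_smul], ?_⟩
          rcases h' with h' | h'
          · left; omega
          · right; rw [h', zero_mul]
    intro l
    obtain ⟨c, l', h, h'⟩ := key t l
    rw [h, map_smul]
    rcases h' with h' | h'
    · rw [hψ0 _ (by omega), smul_zero]
    · rw [h', zero_smul]
  have hFEc : ∀ r, F * (E ^ (r + 1) * γ) = q⁻¹ ^ (r + 1) • (E ^ (r + 1 + (2 * i - 2)) * α) +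
      (gauss k q⁻¹ (r + 1) * (1 - q⁻¹ ^ (r + 2 * i))) • (E ^ r * γ) := by
    intro r
    rw [← mul_assoc, FE_pow q⁻¹ E F g hrel hgE, add_mul, smul_mul_assoc, smul_mul_assoc,
      mul_assoc _ F, hFc, sub_mul, smul_mul_assoc, mul_assoc _ g, hgc, ← mul_assoc, ← pow_add,
      mul_smul_comm, smul_smul, ← pow_add]
    module
  have hdown : ∀ t, t ≤ 2 * i - 2 → ∃ c : k, c ≠ 0 ∧
      F ^ t * (E ^ (N - 1) * γ) = c • (E ^ (N - 1 - t) * γ) := by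
    intro t
    induction t with
    | zero => intro _; exact ⟨1, one_ne_zero, by simp⟩
    | succ t ih =>
      intro ht
      obtain ⟨c, hc0, hc⟩ := ih (by omega)
      obtain ⟨r, hr⟩ : ∃ r, N - 1 - t = r + 1 := ⟨N - 2 - t, by omega⟩
      refine ⟨c * (gauss k q⁻¹ (r + 1) * (1 - q⁻¹ ^ (r + 2 * i))), ?_, ?_⟩
      · refine mul_ne_zero hc0 (mul_ne_zero (gauss_ne hp (by omega) (by omega)) ?_)
        rw [sub_ne_zero, show r + 2 * i = N + (2 * i - 2 - t) by omega, pow_add, hp.pow_eq_one,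
          one_mul]
        exact (hp.pow_ne_one_of_pos_of_lt (by omega) (by omega)).symm
      · rw [pow_succ', mul_assoc, hc, mul_smul_comm, hr, hFEc, hEz (r + 1 + _) (by omega),
          show N - 1 - (t + 1) = r by omega, zero_mul, smul_zero, zero_add, smul_smul]
  have htop : ψ (F ^ (2 * i - 2 + 1) * (E ^ (N - 1) * γ)) ≠ 0 := by
    obtain ⟨c, hc0, hc⟩ := hdown (2 * i - 2) le_rfl
    obtain ⟨r, hr⟩ : ∃ r, N - 1 - (2 * i - 2) = r + 1 := ⟨N - 2 - (2 * i - 2), by omega⟩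
    rw [pow_succ', mul_assoc, hc, mul_smul_comm, hr, hFEc, show r + 2 * i = N by omega,
      hp.pow_eq_one, show r + 1 + (2 * i - 2) = N - 1 by omega]
    simp only [sub_self, mul_zero, zero_smul, add_zero, map_smul, smul_eq_mul]
    exact mul_ne_zero hc0 (mul_ne_zero (pow_ne_zero _ hp0) hψ1)
  rw [Fintype.linearIndependent_iff]
  intro f hf
  rw [Fintype.sum_sum_type] at hf
  simp only [Sum.elim_inl, Sum.elim_inr] at hf
  have hb : ∀ m, ∀ h : m < N, f (Sum.inr ⟨m, h⟩) = 0 := by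
    intro m
    induction m using Nat.strong_induction_on with
    | _ m ih =>
      intro hm
      have := congrArg (fun z => ψ (F ^ (2 * i - 2 + 1) * (E ^ (N - 1 - m) * z))) hf
      simp only [mul_add, Finset.mul_sum, mul_smul_comm, map_add, map_sum, map_smul, mul_zero,
        map_zero] at this
      rw [Finset.sum_eq_zero, zero_add, Finset.sum_eq_single ⟨m, hm⟩] at this
      · rw [← mul_assoc (E ^ _), ← pow_add, Nat.sub_add_cancel (by omega)] at this
        exact (smul_eq_zero.mp this).resolve_right htop
      · intro b _ hbm
        rcases lt_or_gt_of_ne (fun h => hbm (Fin.ext h) : b.1 ≠ m) with h | h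
        · rw [ih b.1 h b.2, zero_smul]
        · rw [← mul_assoc (E ^ _), ← pow_add, hEz _ (by omega)]; simp
      · simp
      · intro b _
        rw [← mul_assoc (E ^ _), ← pow_add, hFta, smul_zero]
  have ha : ∀ m, ∀ h : m < N, f (Sum.inl ⟨m, h⟩) = 0 := by
    intro m
    induction m using Nat.strong_induction_on with
    | _ m ih =>
      intro hm
      have := congrArg (fun z => ψ (E ^ (N - 1 - m) * z)) hf
      simp only [mul_add, Finset.mul_sum, mul_smul_comm, map_add, map_sum, map_smul, mul_zero,
        map_zero] at this
      rw [add_comm, Finset.sum_eq_zero, zero_add, Finset.sum_eq_single ⟨m, hm⟩] at this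
      · rw [← mul_assoc (E ^ _), ← pow_add, Nat.sub_add_cancel (by omega)] at this
        exact (smul_eq_zero.mp this).resolve_right hψ1
      · intro b _ hbm
        rcases lt_or_gt_of_ne (fun h => hbm (Fin.ext h) : b.1 ≠ m) with h | h
        · rw [ih b.1 h b.2, zero_smul]
        · rw [← mul_assoc (E ^ _), ← pow_add, hEz _ (by omega)]; simp
      · simp
      · intro b _
        rw [hb b.1 b.2, zero_smul]
  rintro (⟨m, h⟩ | ⟨m, h⟩)
  · exact ha m h
  · exact hb m h

end final
end QFLaux


open QFL in
/-- Corollary 2.9: the `2n²` vectors `E^l α_{2i,j}`, `E^l γ_{2i,j}` (`0 ≤ l ≤ n²-1`)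
are linearly independent over `k`. -/
theorem statement5 (k : Type) [Field k] [IsAlgClosed k] [CharZero k]
    (n : ℕ) (hn : 0 < n) (h4 : 4 ∣ n) (q : k) (hq : IsPrimitiveRoot q (n ^ 2)) :
    ∀ i j : ℕ, 1 ≤ i → i ≤ n ^ 2 / 2 → j ≤ 1 →
      LinearIndependent k
        (fun p : Fin (n ^ 2) ⊕ Fin (n ^ 2) =>
          Sum.elim (fun l : Fin (n ^ 2) => E k n q ^ (l : ℕ) * alpha k n q i j)
            (fun l : Fin (n ^ 2) => E k n q ^ (l : ℕ) * gam k n q i j) p) := by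
  intro i j h1 hi hj
  have h2 : 2 ∣ n := Dvd.dvd.trans (by norm_num) h4
  have hn4 : 4 ≤ n := Nat.le_of_dvd hn h4
  have hn1 : 1 < n ^ 2 := by nlinarith
  have hi2 : 2 * i ≤ n ^ 2 := by omega
  obtain ⟨ψ, hψ0, hψ1⟩ := QFLaux.functional_exists hn h4 hn1 hq i j hj
  have hqN := hq.pow_eq_one
  refine QFLaux.final_abs q (n ^ 2) i hn1 hq h1 hi2 (E k n q) (F k n q) (QFLaux.gg k n q)
    (alpha k n q i j) (gam k n q i j) ψ _ QFLaux.E_pow QFLaux.FE_rel (QFLaux.gg_E hn hqN) ?_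
    (QFLaux.gg_alpha hn h2 hqN i j) (QFLaux.gg_gam hn h2 hn1 hq i j h1 hi2)
    (QFLaux.gam_spec hn hn1 hq i j hi2).2 hψ0 hψ1
  rw [alpha, ← mul_assoc, ← pow_succ', Nat.sub_add_cancel (by omega), QFLaux.F_pow, zero_mul]
end
end
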